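/- Let X_i, i ∈ I, be pairwise disjoint σ-scattered CSB linear orders. If the sequence of order types ⟨otp(X_i) : i ∈ I⟩ is finite-to-one, i.e. there is no infinite J ⊆ I such that X_i ≅ X_j for all i, j ∈ J, then the disjoint union ⋃_{i∈I} X_i is a reversible poset. -/

import Mathlib

universe u v w

section Defs

variable {α : Type*} {β : Type*}

/-- `f` is a homomorphism from `⟨α, r⟩` to `⟨β, s⟩`. -/
def IsHom (r : α → α → Prop) (s : β → β → Prop) (f : α → β) : Prop :=
  ∀ x y, r x y → s (f x) (f y)

/-- A condensation is a bijective homomorphism. -/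
def IsCond (r : α → α → Prop) (s : β → β → Prop) (f : α → β) : Prop :=
  Function.Bijective f ∧ IsHom r s f

/-- A monomorphism is an injective homomorphism. -/
def IsMono (r : α → α → Prop) (s : β → β → Prop) (f : α → β) : Prop :=
  Function.Injective f ∧ IsHom r s f

/-- An isomorphism of binary structures. -/
def IsIso (r : α → α → Prop) (s : β → β → Prop) (f : α → β) : Prop :=
  Function.Bijective f ∧ ∀ x y, r x y ↔ s (f x) (f y)

/-- A binary structure is reversible iff every self-condensation is an automorphism. -/
def Reversible (r : α → α → Prop) : Prop :=
  ∀ f : α → α, IsCond r r f → IsIso r r f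

/-- A binary structure is connected iff it has exactly one component: it is nonempty and
the least equivalence relation containing `r` relates any two points. -/
def Connected (r : α → α → Prop) : Prop :=
  Nonempty α ∧ ∀ x y, Relation.EqvGen r x y

/-- The relation of the disjoint union of the structures `⟨X i, R i⟩`. -/
def unionRel {I : Type*} {X : I → Type*} (R : ∀ i, X i → X i → Prop) :
    (Σ i, X i) → (Σ i, X i) → Prop :=
  fun a b => ∃ h : a.1 = b.1, R b.1 (h ▸ a.2) b.2

end Defs

/-- An embedding between binary structures (for linear orders regarded as structures
`⟨L, <⟩`, an injective map with `x < y ↔ f x < f y`). -/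
def EmbedsIn {α β : Type*} (r : α → α → Prop) (s : β → β → Prop) : Prop :=
  ∃ f : α → β, Function.Injective f ∧ ∀ x y, r x y ↔ s (f x) (f y)

/-- A linearly ordered set `⟨L, r⟩` is scattered iff the rationals do not embed into it. -/
def Scattered (L : Type*) (r : L → L → Prop) : Prop :=
  ¬ EmbedsIn ((· < ·) : ℚ → ℚ → Prop) r

/-- `⟨L, r⟩` is σ-scattered iff it is the union of at most countably many scattered
suborders. -/
def SigmaScattered (L : Type*) (r : L → L → Prop) : Prop :=
  ∃ S : ℕ → Set L, (⋃ n, S n) = Set.univ ∧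
    ∀ n, Scattered (S n) (fun a b => r a.1 b.1)

/-- A linear order `⟨L, r⟩` is Cantor–Schröder–Bernstein (CSB) iff every linear order
bi-embeddable with it is isomorphic to it. -/
def CSB (L : Type u) (r : L → L → Prop) : Prop :=
  ∀ (L' : Type u) (r' : L' → L' → Prop), IsStrictTotalOrder L' r' →
    EmbedsIn r r' → EmbedsIn r' r →
    ∃ f : L → L', Function.Bijective f ∧ ∀ x y, r x y ↔ r' (f x) (f y)

section CSBOrders

open Set

/-- `s` embeds in `t` as a linear order. -/
def Emb {α β : Type*} [LinearOrder α] [LinearOrder β] (s : Set α) (t : Set β) : Prop :=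
  ∃ f : α → β, StrictMonoOn f s ∧ MapsTo f s t

namespace Emb

variable {α β γ : Type*} [LinearOrder α] [LinearOrder β] [LinearOrder γ]

theorem of_subset {s t : Set α} (h : s ⊆ t) : Emb s t :=
  ⟨id, strictMonoOn_id, h⟩

theorem trans {s : Set α} {t : Set β} {u : Set γ} : Emb s t → Emb t u → Emb s u := by
  rintro ⟨f, hf, hft⟩ ⟨g, hg, hgt⟩
  exact ⟨g ∘ f, hg.comp hf hft, hgt.comp hft⟩

theorem mono {s s' : Set α} {t t' : Set β} (h : Emb s t) (hs : s' ⊆ s) (ht : t ⊆ t') :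
    Emb s' t' :=
  (of_subset hs).trans (h.trans (of_subset ht))

theorem of_strictMono {f : α → β} (hf : StrictMono f) {s : Set α} {t : Set β}
    (h : MapsTo f s t) : Emb s t :=
  ⟨f, hf.strictMonoOn s, h⟩

theorem of_subsingleton {s : Set α} (hs : s.Subsingleton) {t : Set β} (ht : t.Nonempty) :
    Emb s t := by
  obtain ⟨b, hb⟩ := ht
  exact ⟨fun _ => b, fun x hx y hy hxy => absurd (hs hx hy) hxy.ne, fun _ _ => hb⟩

theorem glue {ι : Type*} [LinearOrder ι] [Nonempty β] {s : Set α} {t : Set β} (p : α → ι)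
    (hp : MonotoneOn p s) (T : ι → Set β) (hT : ∀ x ∈ s, T (p x) ⊆ t)
    (hlt : ∀ x ∈ s, ∀ y ∈ s, p x < p y → ∀ a ∈ T (p x), ∀ b ∈ T (p y), a < b)
    (h : ∀ x ∈ s, Emb {y ∈ s | p y = p x} (T (p x))) : Emb s t := by
  classical
  have : ∀ i, ∃ f : α → β, (∃ x ∈ s, p x = i) →
      StrictMonoOn f {y ∈ s | p y = i} ∧ MapsTo f {y ∈ s | p y = i} (T i) := by
    intro i
    by_cases hi : ∃ x ∈ s, p x = i
    · obtain ⟨x, hx, rfl⟩ := hi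
      obtain ⟨f, hf⟩ := h x hx
      exact ⟨f, fun _ => hf⟩
    · exact ⟨fun _ => Classical.arbitrary β, fun h' => absurd h' hi⟩
  choose f hf using this
  refine ⟨fun x => f (p x) x, fun x hx y hy hxy => ?_, fun x hx => ?_⟩
  · rcases (hp hx hy hxy.le).lt_or_eq with h1 | h1
    · exact hlt x hx y hy h1 _ ((hf _ ⟨x, hx, rfl⟩).2 ⟨hx, rfl⟩) _
        ((hf _ ⟨y, hy, rfl⟩).2 ⟨hy, rfl⟩)
    · have := (hf _ ⟨y, hy, rfl⟩).1 ⟨hx, h1⟩ ⟨hy, rfl⟩ hxy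
      simpa only [h1] using this
  · exact hT x hx ((hf _ ⟨x, hx, rfl⟩).2 ⟨hx, rfl⟩)

theorem union [Nonempty β] {s₁ s₂ : Set α} {t₁ t₂ : Set β} (h₁ : Emb s₁ t₁) (h₂ : Emb s₂ t₂)
    (hs : ∀ a ∈ s₁, ∀ b ∈ s₂, a < b) (ht : ∀ a ∈ t₁, ∀ b ∈ t₂, a < b) :
    Emb (s₁ ∪ s₂) (t₁ ∪ t₂) := by
  classical
  obtain ⟨f, hf, hft⟩ := h₁
  obtain ⟨g, hg, hgt⟩ := h₂
  have hn : ∀ x ∈ s₂, x ∉ s₁ := fun x hx hx' => (hs x hx' x hx).false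
  refine ⟨fun x => if x ∈ s₁ then f x else g x, ?_, ?_⟩
  · rintro x (hx | hx) y (hy | hy) hxy
    · simpa [hx, hy] using hf hx hy hxy
    · simpa [hx, hn y hy] using ht _ (hft hx) _ (hgt hy)
    · exact absurd hxy (hs _ hy _ hx).asymm
    · simpa [hn x hx, hn y hy] using hg hx hy hxy
  · rintro x (hx | hx)
    · simpa [hx] using Or.inl (hft hx)
    · simpa [hn x hx] using Or.inr (hgt hx)

theorem of_dual {s : Set α} {t : Set β}
    (h : Emb (OrderDual.ofDual ⁻¹' s) (OrderDual.ofDual ⁻¹' t)) : Emb s t := by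
  obtain ⟨f, hf, hft⟩ := h
  exact ⟨fun x => OrderDual.ofDual (f (OrderDual.toDual x)),
    fun x hx y hy hxy => @hf (OrderDual.toDual y) hy (OrderDual.toDual x) hx hxy,
    fun x hx => @hft (OrderDual.toDual x) hx⟩

end Emb

theorem wellFoundedOn_comap {α β : Type*} {s : Set α} {t : Set β} {r : α → α → Prop}
    {r' : β → β → Prop}
    (ht : t.WellFoundedOn r') (f : α → β) (hft : MapsTo f s t)
    (hf : ∀ x ∈ s, ∀ y ∈ s, r x y → r' (f x) (f y)) : s.WellFoundedOn r := by
  have : WellFounded (InvImage (fun a b : t => r' a b) (fun x : s => ⟨f x, hft x.2⟩)) :=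
    InvImage.wf _ ht
  exact Subrelation.wf (fun {x y} h => hf x x.2 y y.2 h) this

section Surordinal

variable {α β : Type*} [LinearOrder α] [LinearOrder β]

/-- Every final segment of `s` generated by a point of `s` is well-ordered. -/
def IsSurordinal (s : Set α) : Prop :=
  ∀ x ∈ s, (s ∩ Ici x).WellFoundedOn (· < ·)

/-- Every initial segment of `s` generated by a point of `s` is reversely well-ordered. -/
def IsRevSurordinal (s : Set α) : Prop :=
  ∀ x ∈ s, (s ∩ Iic x).WellFoundedOn (· > ·)

/-- Finite ordered sums of surordinals and reversed surordinals. -/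
inductive FinSur : Set α → Prop
  | sur {s : Set α} : IsSurordinal s → FinSur s
  | rev {s : Set α} : IsRevSurordinal s → FinSur s
  | union {s t : Set α} : FinSur s → FinSur t → (∀ a ∈ s, ∀ b ∈ t, a < b) → FinSur (s ∪ t)

theorem Emb.isSurordinal {s : Set α} {t : Set β} (h : Emb s t) (ht : IsSurordinal t) :
    IsSurordinal s := by
  obtain ⟨f, hf, hft⟩ := h
  refine fun x hx => wellFoundedOn_comap (ht (f x) (hft hx)) f ?_ ?_
  · exact fun y hy => ⟨hft hy.1, hf.monotoneOn hx hy.1 hy.2⟩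
  · exact fun y hy z hz h => hf hy.1 hz.1 h

theorem Emb.isRevSurordinal {s : Set α} {t : Set β} (h : Emb s t) (ht : IsRevSurordinal t) :
    IsRevSurordinal s := by
  obtain ⟨f, hf, hft⟩ := h
  refine fun x hx => wellFoundedOn_comap (ht (f x) (hft hx)) f ?_ ?_
  · exact fun y hy => ⟨hft hy.1, hf.monotoneOn hy.1 hx hy.2⟩
  · exact fun y hy z hz h => hf hz.1 hy.1 h

theorem FinSur.of_emb {s : Set α} {t : Set β} (ht : FinSur t) (h : Emb s t) : FinSur s := by
  induction ht generalizing s with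
  | sur ht => exact .sur (h.isSurordinal ht)
  | rev ht => exact .rev (h.isRevSurordinal ht)
  | @union a b ha hb hab iha ihb =>
    obtain ⟨f, hf, hft⟩ := h
    have : s = (s ∩ f ⁻¹' a) ∪ (s ∩ f ⁻¹' b) := by
      rw [← inter_union_distrib_left, ← preimage_union]
      exact (inter_eq_left.2 hft).symm
    rw [this]
    refine .union (iha ⟨f, hf.mono inter_subset_left, fun x hx => hx.2⟩)
      (ihb ⟨f, hf.mono inter_subset_left, fun x hx => hx.2⟩) ?_
    intro x hx y hy
    exact (hf.lt_iff_lt hx.1 hy.1).1 (hab _ hx.2 _ hy.2)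

theorem FinSur.mono {s t : Set α} (ht : FinSur t) (h : s ⊆ t) : FinSur s :=
  ht.of_emb (.of_subset h)

theorem FinSur.of_subsingleton {s : Set α} (hs : s.Subsingleton) : FinSur s :=
  .sur fun _ _ => (hs.anti inter_subset_left).wellFoundedOn

theorem IsSurordinal.dual {s : Set α} (h : IsSurordinal s) :
    IsRevSurordinal (OrderDual.ofDual ⁻¹' s) :=
  fun x hx => h x hx

theorem IsRevSurordinal.dual {s : Set α} (h : IsRevSurordinal s) :
    IsSurordinal (OrderDual.ofDual ⁻¹' s) :=
  fun x hx => h x hx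

theorem FinSur.dual {s : Set α} (h : FinSur s) : FinSur (OrderDual.ofDual ⁻¹' s) := by
  induction h with
  | sur h => exact .rev h.dual
  | rev h => exact .sur h.dual
  | union _ _ hab iha ihb =>
    rw [preimage_union, union_comm]
    exact .union ihb iha fun x hx y hy => hab _ hy _ hx

theorem finSur_dual_iff {s : Set α} : FinSur (OrderDual.ofDual ⁻¹' s) ↔ FinSur s :=
  ⟨fun h => h.dual, fun h => h.dual⟩

/-- A set meeting infinitely many consecutive blocks, none of which is well-ordered or reversely
well-ordered, is not a finite sum of surordinals and reversed surordinals. -/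
theorem FinSur.exists_block {s : Set α} (h : FinSur s) (y : ℕ → α) (hy : Monotone y)
    (hs : ∀ n, Icc (y n) (y (n + 1)) ⊆ s) :
    ∃ n, (Icc (y n) (y (n + 1))).WellFoundedOn (· < ·) ∨
      (Icc (y n) (y (n + 1))).WellFoundedOn (· > ·) := by
  induction h generalizing y with
  | sur h =>
    exact ⟨0, .inl ((h (y 0) (hs 0 (left_mem_Icc.2 (hy (by omega))))).subset
      fun x hx => ⟨hs 0 hx, hx.1⟩)⟩
  | rev h =>
    exact ⟨0, .inr ((h (y 1) (hs 0 (right_mem_Icc.2 (hy (by omega))))).subset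
      fun x hx => ⟨hs 0 hx, hx.2⟩)⟩
  | @union a b ha hb hab iha ihb =>
    by_cases h : ∀ n, y n ∈ a
    · refine iha y hy fun n x hx => ?_
      rcases hs n hx with h' | h'
      · exact h'
      · exact absurd (hab _ (h (n + 1)) _ h') (not_lt.2 hx.2)
    · push Not at h
      obtain ⟨k, hk⟩ := h
      have hkb : y k ∈ b := (hs k (left_mem_Icc.2 (hy (by omega)))).resolve_left hk
      obtain ⟨n, hn⟩ := ihb (fun n => y (k + n)) (fun m n h => hy (by omega)) fun n x hx => by
        rcases hs (k + n) hx with h' | h'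
        · exact absurd (hab _ h' _ hkb) (not_lt.2 ((hy (by omega)).trans hx.1))
        · exact h'
      exact ⟨k + n, hn⟩

/-- `x` has elements on both sides, but neither an immediate predecessor nor an immediate
successor. -/
def IsIsolatedPt (x : α) : Prop :=
  ((∃ y, y < x) ∧ ∃ y, x < y) ∧ (∀ y < x, ∃ z, y < z ∧ z < x) ∧ ∀ y > x, ∃ z, x < z ∧ z < y

theorem FinSur.finite_isolated {s : Set α} (h : FinSur s) (hs : s.OrdConnected) :
    (s ∩ {x | IsIsolatedPt x}).Finite := by
  induction h with
  | @sur s h =>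
    refine Set.Subsingleton.finite fun x hx y hy => ?_
    by_contra hne
    wlog hxy : x < y generalizing x y
    · exact this y hy x hx (Ne.symm hne) (lt_of_le_of_ne (not_lt.1 hxy) (Ne.symm hne))
    obtain ⟨m, hm, hmin⟩ := ((h x hx.1).subset (s := s ∩ Ioc x y)
      fun z hz => ⟨hz.1, hz.2.1.le⟩).exists_minimal ⟨y, hy.1, hxy, le_rfl⟩
    obtain ⟨z, hz, hzm⟩ := hx.2.2.2 m hm.2.1
    exact absurd (hmin ⟨hs.out hx.1 hm.1 ⟨hz.le, hzm.le⟩, hz, hzm.le.trans hm.2.2⟩ hzm.le)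
      (not_le.2 hzm)
  | @rev s h =>
    refine Set.Subsingleton.finite fun x hx y hy => ?_
    by_contra hne
    wlog hxy : y < x generalizing x y
    · exact this y hy x hx (Ne.symm hne) (lt_of_le_of_ne (not_lt.1 hxy) hne)
    obtain ⟨m, hm, hmin⟩ := (((h x hx.1).subset (s := s ∩ Ico y x)
      fun z hz => ⟨hz.1, hz.2.2.le⟩) : _).has_min (univ : Set ↥(s ∩ Ico y x))
        ⟨⟨y, hy.1, le_rfl, hxy⟩, trivial⟩
    obtain ⟨z, hz, hzm⟩ := hx.2.2.1 m m.2.2.2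
    exact hmin ⟨z, hs.out m.2.1 hx.1 ⟨hz.le, hzm.le⟩, m.2.2.1.trans hz.le, hzm⟩ trivial hz
  | @union a b ha hb hab iha ihb =>
    rw [union_inter_distrib_right]
    refine (iha ⟨fun x hx y hy z hz => ?_⟩).union (ihb ⟨fun x hx y hy z hz => ?_⟩)
    · rcases hs.out (.inl hx) (.inl hy) hz with h | h
      · exact h
      · exact absurd (hab _ hy _ h) (not_lt.2 hz.2)
    · rcases hs.out (.inr hx) (.inr hy) hz with h | h
      · exact absurd (hab _ h _ hx) (not_lt.2 hz.1)
      · exact h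

theorem IsIsolatedPt.dual {x : α} (h : IsIsolatedPt x) : IsIsolatedPt (OrderDual.toDual x) :=
  ⟨⟨h.1.2, h.1.1⟩, fun y hy => (h.2.2 y hy).imp fun _ hz => ⟨hz.2, hz.1⟩,
    fun y hy => (h.2.1 y hy).imp fun _ hz => ⟨hz.2, hz.1⟩⟩

end Surordinal

section WellQuasiOrder

variable {α β : Type v} [LinearOrder α] [LinearOrder β]

open Classical in
/-- The order type of a well-ordered set (and `0` for other sets). -/
noncomputable def otp (s : Set α) : Ordinal.{v} :=
  if h : s.WellFoundedOn (· < ·) then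
    @Ordinal.type s (· < ·) { wf := h, toTrichotomous := inferInstance } else 0

theorem otp_le_iff {s : Set α} {t : Set β} [Nonempty β] (hs : s.WellFoundedOn (· < ·))
    (ht : t.WellFoundedOn (· < ·)) : otp s ≤ otp t ↔ Emb s t := by
  classical
  let _ : IsWellOrder s (· < ·) := { wf := hs, toTrichotomous := inferInstance }
  let _ : IsWellOrder t (· < ·) := { wf := ht, toTrichotomous := inferInstance }
  rw [otp, otp, dif_pos hs, dif_pos ht, Ordinal.type_le_iff']
  constructor
  · rintro ⟨f⟩
    refine ⟨fun x => if h : x ∈ s then f ⟨x, h⟩ else Classical.arbitrary β, ?_, ?_⟩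
    · intro x hx y hy hxy
      simpa [hx, hy] using f.map_rel_iff.2 (show (⟨x, hx⟩ : s) < ⟨y, hy⟩ from hxy)
    · intro x hx
      simp [hx]
  · rintro ⟨f, hf, hft⟩
    exact ⟨RelEmbedding.ofMonotone (fun x => ⟨f x, hft x.2⟩) fun a b h => hf a.2 b.2 h⟩

/-- The least ordinal above all order types of final segments. -/
noncomputable def sordRank (s : Set α) : Ordinal.{v} :=
  ⨆ x : s, Order.succ (otp (s ∩ Ici (x : α)))

theorem otp_lt_sordRank {s : Set α} {x : α} (hx : x ∈ s) : otp (s ∩ Ici x) < sordRank s :=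
  Ordinal.lt_iSup_iff.2 ⟨⟨x, hx⟩, Order.lt_succ _⟩

theorem sordRank_mono {s t : Set α} (ht : IsSurordinal t) (h : s ⊆ t) :
    sordRank s ≤ sordRank t := by
  refine Ordinal.iSup_le_iff.2 fun x => Order.succ_le_of_lt ?_
  have : Nonempty α := ⟨x⟩
  refine lt_of_le_of_lt ?_ (otp_lt_sordRank (h x.2))
  have hst : s ∩ Ici (x : α) ⊆ t ∩ Ici (x : α) := inter_subset_inter_left _ h
  exact (otp_le_iff ((ht x (h x.2)).subset hst) (ht x (h x.2))).2 (.of_subset hst)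

/-- A surordinal without least element all of whose initial segments have the same rank. -/
def IsTail (s : Set α) : Prop :=
  IsSurordinal s ∧ s.Nonempty ∧ ∀ x ∈ s, sordRank (s ∩ Iio x) = sordRank s

theorem IsTail.exists_emb {s : Set α} {t : Set β} (hs : IsTail s) (ht : IsTail t)
    (h : sordRank s ≤ sordRank t) {x : α} (hx : x ∈ s) {z : β} (hz : z ∈ t) :
    ∃ z' ∈ t, z' < z ∧ Emb (s ∩ Ici x) (t ∩ Ico z' z) := by
  have : Nonempty β := ⟨z⟩
  have h1 : otp (s ∩ Ici x) < sordRank (t ∩ Iio z) :=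
    (otp_lt_sordRank hx).trans_le (h.trans (ht.2.2 z hz).ge)
  obtain ⟨⟨z', hz'⟩, h2⟩ := Ordinal.lt_iSup_iff.1 h1
  refine ⟨z', hz'.1, hz'.2, ?_⟩
  have h3 : t ∩ Iio z ∩ Ici z' ⊆ t ∩ Ici z' := fun w hw => ⟨hw.1.1, hw.2⟩
  refine ((otp_le_iff (hs.1 x hx) ((ht.1 z' hz'.1).subset h3)).1
    (Order.lt_succ_iff.1 h2)).mono Subset.rfl fun w hw => ⟨hw.1.1, hw.2, hw.1.2⟩

theorem IsTail.exists_lt {s : Set α} (hs : IsTail s) {x : α} (hx : x ∈ s) : ∃ y ∈ s, y < x :=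
  let ⟨y, hy, hyx, _⟩ := hs.exists_emb hs le_rfl hx hx
  ⟨y, hy, hyx⟩

theorem IsTail.exists_coinitial {s : Set α} (hs : IsTail s) :
    ∃ x : ℕ → α, (∀ n, x n ∈ s) ∧ ∀ y ∈ s, ∃ n, x n ≤ y := by
  choose g hgs hg using fun x : s => hs.exists_lt x.2
  obtain ⟨x₀, hx₀⟩ := hs.2.1
  let x : ℕ → s := fun n => Nat.rec ⟨x₀, hx₀⟩ (fun _ y => ⟨g y, hgs y⟩) n
  refine ⟨fun n => (x n).1, fun n => (x n).2, fun y hy => ?_⟩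
  by_contra! hcon
  have hwf := hs.1 y hy
  refine (RelEmbedding.wellFounded_iff_isEmpty.1 hwf).false
    (RelEmbedding.natGT (fun n => (⟨(x n).1, (x n).2, (hcon n).le⟩ : ↥(s ∩ Ici y)))
      fun n => hg (x n))

theorem IsTail.emb {s : Set α} {t : Set β} (hs : IsTail s) (ht : IsTail t)
    (h : sordRank s ≤ sordRank t) : Emb s t := by
  obtain ⟨x, hxs, hx⟩ := hs.exists_coinitial
  obtain ⟨z₀, hz₀⟩ := ht.2.1
  have : Nonempty β := ⟨z₀⟩
  choose g hgt hg hge using fun (n : ℕ) (z : t) => hs.exists_emb ht h (hxs n) z.2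
  let z : ℕ → t := fun n => Nat.rec ⟨z₀, hz₀⟩ (fun n w => ⟨g n w, hgt n w⟩) n
  have hz : Antitone z := antitone_nat_of_succ_le fun n => (hg n (z n)).le
  have hmem : ∀ y ∈ s, x (sInf {n | x n ≤ y}) ≤ y := fun y hy => Nat.sInf_mem (hx y hy)
  refine Emb.glue (ι := ℕᵒᵈ) (fun y => OrderDual.toDual (sInf {n | x n ≤ y})) ?_
    (fun n => t ∩ Ico (z (OrderDual.ofDual n + 1)).1 (z (OrderDual.ofDual n)).1)
    (fun _ _ => inter_subset_left) ?_ ?_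
  · exact fun y hy y' hy' hyy' => Nat.sInf_le ((hmem y hy).trans hyy')
  · intro y hy y' hy' hlt a ha b hb
    have h1 : sInf {n | x n ≤ y'} + 1 ≤ sInf {n | x n ≤ y} := hlt
    exact ha.2.2.trans_le (le_trans (hz h1) hb.2.1)
  · intro y hy
    refine (hge _ (z _)).mono (fun y' hy' => ⟨hy'.1, ?_⟩) Subset.rfl
    have h1 := hmem y' hy'.1
    have h2 : sInf {n | x n ≤ y'} = sInf {n | x n ≤ y} := hy'.2
    rwa [h2] at h1

/-- `s` is well-ordered of type `c.2`, or a tail of rank `c.2`, according to `c.1`. -/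
def IsSurAtom (s : Set α) (c : Bool × Ordinal.{v}) : Prop :=
  bif c.1 then IsTail s ∧ sordRank s = c.2 else s.WellFoundedOn (· < ·) ∧ otp s = c.2

theorem IsSurAtom.emb [Nonempty β] {s : Set α} {t : Set β} {c d : Bool × Ordinal.{v}}
    (hs : IsSurAtom s c) (ht : IsSurAtom t d) (h1 : c.1 = d.1) (h2 : c.2 ≤ d.2) : Emb s t := by
  obtain ⟨_ | _, c⟩ := c <;> obtain ⟨_ | _, d⟩ := d <;> simp only [IsSurAtom, cond] at * <;>
    try contradiction
  · exact (otp_le_iff hs.1 ht.1).1 (by rwa [hs.2, ht.2])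
  · exact hs.1.emb ht.1 (by rwa [hs.2, ht.2])

/-- `s` or its dual is a well-ordered set or a tail. -/
def IsFinSurAtom (s : Set α) (c : Bool × Bool × Ordinal.{v}) : Prop :=
  bif c.1 then IsSurAtom (OrderDual.ofDual ⁻¹' s) c.2 else IsSurAtom s c.2

theorem IsFinSurAtom.emb [Nonempty β] {s : Set α} {t : Set β} {c d : Bool × Bool × Ordinal.{v}}
    (hs : IsFinSurAtom s c) (ht : IsFinSurAtom t d)
    (h : c.1 = d.1 ∧ c.2.1 = d.2.1 ∧ c.2.2 ≤ d.2.2) :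
    Emb s t := by
  obtain ⟨_ | _, c⟩ := c <;> obtain ⟨_ | _, d⟩ := d <;> simp only [IsFinSurAtom, cond] at * <;>
    try simp at h
  · exact hs.emb ht h.1 h.2
  · have : Nonempty βᵒᵈ := ‹Nonempty β›
    exact .of_dual (hs.emb ht h.1 h.2)

/-- `s` is an ordered sum of atoms with the given codes. -/
inductive RealizesCodes : Set α → List (Bool × Bool × Ordinal.{v}) → Prop
  | nil : RealizesCodes ∅ []
  | cons {s t : Set α} {c : Bool × Bool × Ordinal.{v}} {l : List (Bool × Bool × Ordinal.{v})} :
      IsFinSurAtom s c → RealizesCodes t l → (∀ a ∈ s, ∀ b ∈ t, a < b) →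
      RealizesCodes (s ∪ t) (c :: l)

theorem RealizesCodes.append {s t : Set α} {l l' : List (Bool × Bool × Ordinal.{v})}
    (hs : RealizesCodes s l) (ht : RealizesCodes t l') (h : ∀ a ∈ s, ∀ b ∈ t, a < b) :
    RealizesCodes (s ∪ t) (l ++ l') := by
  induction hs with
  | nil => simpa
  | @cons a b c l ha hb hab ih =>
    rw [union_assoc]
    refine .cons ha (ih fun x hx => h x (.inr hx)) fun x hx y hy => ?_
    rcases hy with hy | hy
    · exact hab x hx y hy
    · exact h x (.inl hx) y hy

theorem IsFinSurAtom.realizesCodes {s : Set α} {c : Bool × Bool × Ordinal.{v}}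
    (h : IsFinSurAtom s c) : RealizesCodes s [c] := by
  simpa using RealizesCodes.cons h .nil

theorem IsSurordinal.exists_atoms {s : Set α} (hs : IsSurordinal s) :
    ∃ t w : Set α, s = t ∪ w ∧ (∀ a ∈ t, ∀ b ∈ w, a < b) ∧
      (t = ∅ ∨ ∃ c, IsSurAtom t c) ∧ ∃ c, IsSurAtom w c := by
  rcases s.eq_empty_or_nonempty with rfl | hne
  · exact ⟨∅, ∅, by simp, by simp, .inl rfl, (false, _), by simp [IsSurAtom]; rfl⟩
  obtain ⟨⟨x, hx⟩, hmin⟩ : ∃ x : s, ∀ y : s,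
      sordRank (s ∩ Iio (x : α)) ≤ sordRank (s ∩ Iio (y : α)) := by
    have : Nonempty s := hne.to_subtype
    exact ⟨_, fun y => Function.argmin_le (fun x : s => sordRank (s ∩ Iio (x : α))) y⟩
  have hsur : IsSurordinal (s ∩ Iio x) := (Emb.of_subset inter_subset_left).isSurordinal hs
  refine ⟨s ∩ Iio x, s ∩ Ici x, by rw [← inter_union_distrib_left, Iio_union_Ici, inter_univ],
    fun a ha b hb => lt_of_lt_of_le ha.2 hb.2, ?_, (false, _), hs x hx, rfl⟩
  rcases (s ∩ Iio x).eq_empty_or_nonempty with he | hne'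
  · exact .inl he
  · refine .inr ⟨(true, _), ⟨hsur, hne', fun y hy => ?_⟩, rfl⟩
    refine le_antisymm (sordRank_mono hsur inter_subset_left) ((hmin ⟨y, hy.1⟩).trans_eq ?_)
    congr 1
    ext z
    exact ⟨fun hz => ⟨⟨hz.1, hz.2.trans hy.2⟩, hz.2⟩, fun hz => ⟨hz.1.1, hz.2⟩⟩

theorem FinSur.exists_realizesCodes {s : Set α} (h : FinSur s) : ∃ l, RealizesCodes s l := by
  induction h with
  | sur h =>
    obtain ⟨t, w, rfl, hlt, ht, c, hw⟩ := h.exists_atoms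
    have hw' : IsFinSurAtom w (false, c) := hw
    rcases ht with rfl | ⟨d, hd⟩
    · exact ⟨_, by simpa using hw'.realizesCodes⟩
    · have hd' : IsFinSurAtom t (false, d) := hd
      exact ⟨_, hd'.realizesCodes.append hw'.realizesCodes hlt⟩
  | @rev s h =>
    obtain ⟨t, w, hs, hlt, ht, c, hw⟩ := h.dual.exists_atoms
    have hw' : IsFinSurAtom (OrderDual.toDual ⁻¹' w) (true, c) := hw
    have hs' : s = (OrderDual.toDual ⁻¹' w) ∪ (OrderDual.toDual ⁻¹' t) := by
      rw [union_comm]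
      exact hs
    rw [hs']
    rcases ht with rfl | ⟨d, hd⟩
    · exact ⟨_, by simpa using hw'.realizesCodes⟩
    · have hd' : IsFinSurAtom (OrderDual.toDual ⁻¹' t) (true, d) := hd
      exact ⟨_, hw'.realizesCodes.append hd'.realizesCodes fun a ha b hb => hlt _ hb _ ha⟩
  | union _ _ hab iha ihb =>
    obtain ⟨l, hl⟩ := iha
    obtain ⟨l', hl'⟩ := ihb
    exact ⟨_, hl.append hl' hab⟩

theorem RealizesCodes.emb [Nonempty β] {s : Set α} {t : Set β}
    {l l' : List (Bool × Bool × Ordinal.{v})} (hs : RealizesCodes s l) (ht : RealizesCodes t l')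
    (h : List.SublistForall₂ (fun c d : Bool × Bool × Ordinal.{v} =>
      c.1 = d.1 ∧ c.2.1 = d.2.1 ∧ c.2.2 ≤ d.2.2) l l') : Emb s t := by
  induction h generalizing s t with
  | nil =>
    cases hs
    exact ⟨fun _ => Classical.arbitrary β, by simp [StrictMonoOn], by simp [MapsTo]⟩
  | cons hr _ ih =>
    cases hs with | cons ha hb hab =>
    cases ht with | cons ha' hb' hab' =>
    exact (ha.emb ha' hr).union (ih hb hb') hab hab'
  | cons_right _ ih =>
    cases ht with | cons ha' hb' hab' =>
    exact (ih hs hb').mono Subset.rfl subset_union_right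

theorem FinSur.wellQuasiOrdered {X : ℕ → Type v} [∀ n, LinearOrder (X n)] [∀ n, Nonempty (X n)]
    (s : ∀ n, Set (X n)) (hs : ∀ n, FinSur (s n)) : ∃ m n, m < n ∧ Emb (s m) (s n) := by
  choose l hl using fun n => (hs n).exists_realizesCodes
  let r : Bool × Bool × Ordinal.{v} → Bool × Bool × Ordinal.{v} → Prop :=
    fun c d => c.1 = d.1 ∧ c.2.1 = d.2.1 ∧ c.2.2 ≤ d.2.2
  have : IsPreorder (Bool × Bool × Ordinal.{v}) r :=
    { refl := fun a => ⟨rfl, rfl, le_rfl⟩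
      trans := fun a b c h h' => ⟨h.1.trans h'.1, h.2.1.trans h'.2.1, h.2.2.trans h'.2.2⟩ }
  have hr : WellQuasiOrdered r :=
    (Finite.wellQuasiOrdered (α := Bool) (· = ·)).prod
      ((Finite.wellQuasiOrdered (α := Bool) (· = ·)).prod wellQuasiOrdered_le)
  have hl' := Set.PartiallyWellOrderedOn.partiallyWellOrderedOn_sublistForall₂ r
    (partiallyWellOrderedOn_univ_iff.2 hr)
  obtain ⟨m, n, hmn, h⟩ := hl' fun n => ⟨l n, fun _ _ => trivial⟩
  exact ⟨m, n, hmn, (hl m).emb (hl n) h⟩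

theorem FinSur.eventually_emb {X : ℕ → Type v} [∀ n, LinearOrder (X n)] [∀ n, Nonempty (X n)]
    (s : ∀ n, Set (X n)) (hs : ∀ n, FinSur (s n)) :
    ∃ N, ∀ n ≥ N, ∀ k, ∃ m ≥ k, Emb (s n) (s m) := by
  by_contra! h
  choose g hg k hk using h
  let c : ℕ → ℕ := fun n => Nat.rec 0 (fun _ d => max d (k d)) n
  have hc : Monotone c := monotone_nat_of_le_succ fun n => le_max_left _ _
  obtain ⟨m, n, hmn, h⟩ := FinSur.wellQuasiOrdered (fun n => s (g (c n))) fun n => hs _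
  exact hk (c m) _ (((le_max_right _ _).trans (hc hmn)).trans (hg _)) h

end WellQuasiOrder

section Insertion

variable {L : Type v}

/-- The points of `B`, with the points in `R` replaced by copies of `T ∪ {0}`. -/
def Ins (R : Set L) (T : Set ℚ) (B : Set L) : Set (L ×ₗ ℚ) :=
  {p | (ofLex p).1 ∈ B ∧ ((ofLex p).2 = 0 ∨ ((ofLex p).1 ∈ R ∧ (ofLex p).2 ∈ T))}

theorem Ins.mono {R R' : Set L} {T T' : Set ℚ} {B B' : Set L} (hR : R ∩ B ⊆ R') (hT : T ⊆ T')
    (hB : B ⊆ B') : Ins R T B ⊆ Ins R' T' B' :=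
  fun _ hp => ⟨hB hp.1, hp.2.imp id fun h => ⟨hR ⟨h.1, hp.1⟩, hT h.2⟩⟩

theorem Ins.union {R : Set L} {T : Set ℚ} {B B' : Set L} :
    Ins R T (B ∪ B') = Ins R T B ∪ Ins R T B' := by
  ext p
  simp [Ins, or_and_right]

variable [LinearOrder L]

theorem Emb.range {ι α β : Type*} [LinearOrder ι] [LinearOrder α] [LinearOrder β] [Nonempty ι]
    {u : ι → α} {a : ι → β} (hu : StrictMono u) (ha : StrictMono a) :
    Emb (range u) (range a) := by
  refine ⟨a ∘ Function.invFun u, ?_, fun x _ => ⟨_, rfl⟩⟩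
  rintro _ ⟨i, rfl⟩ _ ⟨j, rfl⟩ hij
  simp only [Function.comp, Function.leftInverse_invFun hu.injective _]
  exact ha (hu.lt_iff_lt.1 hij)

theorem fst_le_fst {p q : L ×ₗ ℚ} (h : p ≤ q) : (ofLex p).1 ≤ (ofLex q).1 := by
  rcases Prod.Lex.le_iff.1 h with h | h
  · exact h.le
  · exact h.1.le

theorem lt_of_fst_lt {p q : L ×ₗ ℚ} (h : (ofLex p).1 < (ofLex q).1) : p < q :=
  Prod.Lex.lt_iff.2 (.inl h)

theorem Ins.lt {R : Set L} {T : Set ℚ} {B B' : Set L} (h : ∀ a ∈ B, ∀ b ∈ B', a < b) :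
    ∀ a ∈ Ins R T B, ∀ b ∈ Ins R T B', a < b :=
  fun _ ha _ hb => lt_of_fst_lt (h _ ha.1 _ hb.1)

theorem Ins.emb_empty (T : Set ℚ) (B : Set L) : Emb (Ins ∅ T B) B := by
  refine ⟨fun p => (ofLex p).1, fun p hp q hq hpq => ?_, fun p hp => hp.1⟩
  have h1 : (ofLex p).2 = 0 := by simpa [Ins] using hp.2
  have h2 : (ofLex q).2 = 0 := by simpa [Ins] using hq.2
  rcases Prod.Lex.lt_iff.1 hpq with h | h
  · exact h
  · exact absurd h.2 (by simp [h1, h2])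

theorem Ins.emb_singleton (R : Set L) {T : Set ℚ} (hT : 0 ∈ T) (x : L) :
    Emb (Ins R T {x}) T := by
  refine ⟨fun p => (ofLex p).2, fun p hp q hq hpq => ?_, fun p hp => ?_⟩
  · have h1 : (ofLex p).1 = x := hp.1
    have h2 : (ofLex q).1 = x := hq.1
    rcases Prod.Lex.lt_iff.1 hpq with h | h
    · exact absurd h (by simp [h1, h2])
    · exact h.2
  · rcases hp.2 with h | h
    · simpa [h] using hT
    · exact h.2

theorem Ins.of_finite {Fit : Set (L ×ₗ ℚ) → Prop} {R : Set L} {T : Set ℚ} {B : Set L}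
    (hmono : ∀ s t, s ⊆ t → Fit t → Fit s)
    (hunion : ∀ s t, Fit s → Fit t → (∀ a ∈ s, ∀ b ∈ t, a < b) → Fit (s ∪ t))
    (hB : Fit (Ins ∅ T B)) (hx : ∀ x ∈ R ∩ B, Fit (Ins R T {x})) (hfin : (R ∩ B).Finite) :
    Fit (Ins R T B) := by
  suffices h : ∀ F : Set L, F.Finite → ∀ B' ⊆ B, R ∩ B' ⊆ F → Fit (Ins R T B') from
    h _ hfin B Subset.rfl Subset.rfl
  intro F hF
  induction F, hF using Set.Finite.induction_on with
  | empty =>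
    exact fun B' hB' h => hmono _ _ (Ins.mono h Subset.rfl hB') hB
  | @insert r F _ _ ih =>
    intro B' hB' h
    have h1 : Fit (Ins R T (B' ∩ Iio r)) := ih _ (inter_subset_left.trans hB') fun y hy =>
      (h ⟨hy.1, hy.2.1⟩).resolve_left hy.2.2.ne
    have h2 : Fit (Ins R T (B' ∩ Ioi r)) := ih _ (inter_subset_left.trans hB') fun y hy =>
      (h ⟨hy.1, hy.2.1⟩).resolve_left hy.2.2.ne'
    by_cases hr : r ∈ R ∩ B'
    · refine hmono _ _ ?_ (hunion _ _ h1 (hunion _ _ (hx r ⟨hr.1, hB' hr.2⟩) h2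
        (Ins.lt fun a ha b hb => ?_)) ?_)
      · rw [← Ins.union, ← Ins.union]
        refine Ins.mono inter_subset_left Subset.rfl fun y hy => ?_
        rcases lt_trichotomy y r with h | h | h
        · exact .inl ⟨hy, h⟩
        · exact .inr (.inl h)
        · exact .inr (.inr ⟨hy, h⟩)
      · rw [mem_singleton_iff.1 ha]
        exact hb.2
      · rw [← Ins.union]
        refine Ins.lt fun a ha b hb => ?_
        rcases hb with hb | hb
        · rw [mem_singleton_iff.1 hb]
          exact ha.2
        · exact lt_trans ha.2 hb.2
    · exact ih B' hB' fun y hy => (h hy).resolve_left fun hyr => hr (hyr ▸ hy)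

/-- A copy of `ω + 1 + ω*`. -/
def twoSidedSeq : Set ℚ :=
  range (fun n : ℕ => (-1 / (n + 1) : ℚ)) ∪ ({0} ∪ range (fun n : ℕᵒᵈ => (1 / (n.ofDual + 1) : ℚ)))

theorem strictMono_neg_one_div : StrictMono (fun n : ℕ => (-1 / (n + 1) : ℚ)) := by
  intro m n h
  have : (m : ℚ) < n := by exact_mod_cast h
  simp only [neg_div, neg_lt_neg_iff]
  exact one_div_lt_one_div_of_lt (by positivity) (by linarith)

theorem strictMono_one_div : StrictMono (fun n : ℕᵒᵈ => (1 / (n.ofDual + 1) : ℚ)) := by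
  intro m n h
  have : (n.ofDual : ℚ) < m.ofDual := by exact_mod_cast h
  exact one_div_lt_one_div_of_lt (by positivity) (by linarith)

theorem zero_mem_twoSidedSeq : (0 : ℚ) ∈ twoSidedSeq := .inr (.inl rfl)

theorem neg_mem_twoSidedSeq {q : ℚ} (h : q ∈ twoSidedSeq) : -q ∈ twoSidedSeq := by
  rcases h with ⟨n, rfl⟩ | h | ⟨n, rfl⟩
  · exact .inr (.inr ⟨OrderDual.toDual n, by simp [neg_div]⟩)
  · rw [mem_singleton_iff.1 h, neg_zero]
    exact zero_mem_twoSidedSeq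
  · exact .inl ⟨OrderDual.ofDual n, by simp [neg_div]⟩

theorem twoSidedSeq_of {Fit : Set ℚ → Prop}
    (hunion : ∀ s t, Fit s → Fit t → (∀ a ∈ s, ∀ b ∈ t, a < b) → Fit (s ∪ t))
    (h1 : Fit (range (fun n : ℕ => (-1 / (n + 1) : ℚ)))) (h2 : Fit {0})
    (h3 : Fit (range (fun n : ℕᵒᵈ => (1 / (n.ofDual + 1) : ℚ)))) : Fit twoSidedSeq := by
  have hpos : ∀ n : ℕ, 0 < (1 / (n + 1) : ℚ) := fun n => by positivity
  refine hunion _ _ h1 (hunion _ _ h2 h3 ?_) ?_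
  · rintro a ha _ ⟨n, rfl⟩
    rw [mem_singleton_iff.1 ha]
    exact hpos _
  · rintro _ ⟨n, rfl⟩ b hb
    have := hpos n
    simp only [neg_div]
    rcases hb with hb | ⟨m, rfl⟩
    · rw [mem_singleton_iff.1 hb]
      linarith
    · have := hpos m.ofDual
      dsimp only
      linarith

theorem finSur_twoSidedSeq : FinSur twoSidedSeq := by
  refine twoSidedSeq_of (fun _ _ => .union) ?_ (.of_subsingleton subsingleton_singleton) ?_
  · refine FinSur.of_emb (t := range (id : ℕ → ℕ)) (.sur fun x _ => ?_)
      (.range strictMono_neg_one_div strictMono_id)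
    exact wellFounded_lt.wellFoundedOn
  · refine FinSur.of_emb (t := range (id : ℕᵒᵈ → ℕᵒᵈ)) (.rev fun x _ => ?_)
      (.range strictMono_one_div strictMono_id)
    exact wellFounded_gt.wellFoundedOn

/-- A convex set, not a finite sum of surordinals and reversed surordinals, absorbing the insertion
of copies of `ω + 1 + ω*` at all isolated points and at many points everywhere. -/
structure IsCore (J : Set L) : Prop where
  ordConnected : J.OrdConnected
  not_finSur : ¬ FinSur J
  exists_emb : ∃ R : Set L, (∀ x ∈ J, IsIsolatedPt x → x ∈ R) ∧ Emb (Ins R twoSidedSeq J) J ∧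
    ∀ I ⊆ J, I.OrdConnected → ¬ FinSur I →
      ∃ x ∈ R ∩ I, ∃ y ∈ R ∩ I, ∃ z ∈ R ∩ I, x < y ∧ y < z

theorem IsCore.of_dual {J : Set L} (h : IsCore (OrderDual.ofDual ⁻¹' J)) : IsCore J := by
  obtain ⟨R, h1, ⟨f, hf, hft⟩, h3⟩ := h.exists_emb
  refine ⟨⟨fun x hx y hy z hz => ?_⟩, fun h' => h.not_finSur h'.dual, OrderDual.toDual ⁻¹' R,
    fun x hx hi => h1 _ hx hi.dual, ?_, fun I hI hc hn => ?_⟩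
  · exact h.ordConnected.out (x := OrderDual.toDual y) hy (y := OrderDual.toDual x) hx ⟨hz.2, hz.1⟩
  · let g : L ×ₗ ℚ → Lᵒᵈ ×ₗ ℚ := fun p => toLex (OrderDual.toDual (ofLex p).1, -(ofLex p).2)
    have hg : ∀ p q, p < q → g q < g p := by
      intro p q hpq
      rw [Prod.Lex.lt_iff] at hpq ⊢
      rcases hpq with h | h
      · exact .inl h
      · refine .inr ⟨by simp [g, h.1], by simpa [g] using h.2⟩
    have hgm : MapsTo g (Ins (OrderDual.toDual ⁻¹' R) twoSidedSeq J)
        (Ins R twoSidedSeq (OrderDual.ofDual ⁻¹' J)) := by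
      refine fun p hp => ⟨hp.1, hp.2.imp (fun h => ?_) fun h => ⟨h.1, neg_mem_twoSidedSeq h.2⟩⟩
      simp [g, h]
    exact ⟨fun p => OrderDual.ofDual (f (g p)), fun p hp q hq hpq =>
      hf (hgm hq) (hgm hp) (hg _ _ hpq), fun p hp => hft (hgm hp)⟩
  · obtain ⟨x, hx, y, hy, z, hz, hxy, hyz⟩ := h3 (OrderDual.ofDual ⁻¹' I) (fun x hx => hI hx)
      ⟨fun x hx y hy z hz => hc.out hy hx ⟨hz.2, hz.1⟩⟩ fun h => hn (finSur_dual_iff.1 h)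
    exact ⟨z, hz, y, hy, x, hx, hyz, hxy⟩

theorem wellFoundedOn_of_Iic {C : Set L} {y : L}
    (h : ∀ z ∈ C, y ≤ z → (C ∩ Icc y z).WellFoundedOn (· < ·)) :
    (C ∩ Ici y).WellFoundedOn (· < ·) := by
  rw [Set.wellFoundedOn_iff_no_descending_seq]
  intro f hf
  refine Set.wellFoundedOn_iff_no_descending_seq.1 (h (f 0) (hf 0).1 (hf 0).2) f fun n =>
    ⟨(hf n).1, (hf n).2, ?_⟩
  rcases n.eq_zero_or_pos with rfl | hn
  · exact le_rfl
  · exact (f.map_rel_iff.2 hn).le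

theorem emb_of_not_wellFoundedOn_gt {s : Set L} (h : ¬ s.WellFoundedOn (· > ·)) :
    Emb (range (fun n : ℕ => (-1 / (n + 1) : ℚ))) s := by
  rw [Set.wellFoundedOn_iff_no_descending_seq] at h
  push Not at h
  obtain ⟨f, hf⟩ := h
  refine (Emb.range strictMono_neg_one_div (a := f) fun m n hmn => f.map_rel_iff.2 hmn).mono
    Subset.rfl ?_
  rintro _ ⟨n, rfl⟩
  exact hf n

theorem emb_of_not_wellFoundedOn_lt {s : Set L} (h : ¬ s.WellFoundedOn (· < ·)) :
    Emb (range (fun n : ℕᵒᵈ => (1 / (n.ofDual + 1) : ℚ))) s := by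
  rw [Set.wellFoundedOn_iff_no_descending_seq] at h
  push Not at h
  obtain ⟨f, hf⟩ := h
  refine (Emb.range strictMono_one_div (a := fun n => f (OrderDual.ofDual n))
    fun m n hmn => f.map_rel_iff.2 hmn).mono Subset.rfl ?_
  rintro _ ⟨n, rfl⟩
  exact hf _

theorem exists_emb_union {M : Type*} [LinearOrder M] {y : ℕ → L} (hy : Monotone y) {N : ℕ}
    {s t : Set M} (hs : ∀ n ≥ N, ∃ m > n, Emb s (Ico (y n) (y m)))
    (ht : ∀ n ≥ N, ∃ m > n, Emb t (Ico (y n) (y m))) (hst : ∀ a ∈ s, ∀ b ∈ t, a < b) :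
    ∀ n ≥ N, ∃ m > n, Emb (s ∪ t) (Ico (y n) (y m)) := by
  intro n hn
  have : Nonempty L := ⟨y 0⟩
  obtain ⟨m, hm, h1⟩ := hs n hn
  obtain ⟨k, hk, h2⟩ := ht m (hn.trans hm.le)
  refine ⟨k, hm.trans hk, (h1.union h2 hst fun a ha b hb => ha.2.trans_le hb.1).mono
    Subset.rfl ?_⟩
  exact union_subset (Ico_subset_Ico_right (hy hk.le)) (Ico_subset_Ico_left (hy hm.le))

theorem exists_isCore_of_right {C : Set L} (hC : C.OrdConnected) (hn : ¬ FinSur C)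
    (hfin : ∀ y ∈ C, FinSur (C ∩ Iic y)) : ∃ J ⊆ C, IsCore J := by
  have hne : C.Nonempty := by
    rw [nonempty_iff_ne_empty]
    rintro rfl
    exact hn (.of_subsingleton subsingleton_empty)
  obtain ⟨x₀, hx₀⟩ := hne
  have : Nonempty L := ⟨x₀⟩
  have hIci : ∀ y ∈ C, ¬ FinSur (C ∩ Ici y) := fun y hy h => hn <| by
    have h1 : C = C ∩ Iio y ∪ C ∩ Ici y := by
      rw [← inter_union_distrib_left, Iio_union_Ici, inter_univ]
    rw [h1]
    exact .union ((hfin y hy).mono (inter_subset_inter_right _ Iio_subset_Iic_self)) h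
      fun a ha b hb => lt_of_lt_of_le ha.2 hb.2
  have hstep : ∀ y : C, ∃ y' : C, y < y' ∧ ¬ (Icc (y : L) y').WellFoundedOn (· < ·) ∧
      ¬ (Icc (y : L) y').WellFoundedOn (· > ·) := by
    intro y
    obtain ⟨y₁, hy₁, h₁⟩ : ∃ y₁ ∈ C, ¬ (Icc (y : L) y₁).WellFoundedOn (· > ·) := by
      by_contra! h
      exact hIci y y.2 (.rev fun x hx => (h x hx.1).subset fun z hz => ⟨hz.1.2, hz.2⟩)
    obtain ⟨y₂, hy₂, h₂⟩ : ∃ y₂ ∈ C, ¬ (Icc (y : L) y₂).WellFoundedOn (· < ·) := by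
      by_contra! h
      exact hIci y y.2 (.sur fun x hx => (wellFoundedOn_of_Iic fun z hz _ =>
        (h z hz).subset inter_subset_right).subset inter_subset_left)
    have hm : max y₁ y₂ ∈ C := by
      rcases max_choice y₁ y₂ with h | h <;> rw [h] <;> assumption
    have h3 : ¬ (Icc (y : L) (max y₁ y₂)).WellFoundedOn (· > ·) := fun h =>
      h₁ (h.subset (Icc_subset_Icc_right (le_max_left _ _)))
    refine ⟨⟨max y₁ y₂, hm⟩, ?_,
      fun h => h₂ (h.subset (Icc_subset_Icc_right (le_max_right _ _))), h3⟩
    by_contra hlt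
    exact h3 (subsingleton_Icc_of_ge (b := max y₁ y₂) (a := (y : L)) (not_lt.1 hlt)).wellFoundedOn
  choose g hg hg1 hg2 using hstep
  let y' : ℕ → C := fun n => Nat.rec ⟨x₀, hx₀⟩ (fun _ y => g y) n
  let y : ℕ → L := fun n => (y' n).1
  have hyC : ∀ n, y n ∈ C := fun n => (y' n).2
  have hy : StrictMono y := strictMono_nat_of_lt_succ fun n => hg (y' n)
  have hy1 : ∀ n, ¬ (Icc (y n) (y (n + 1))).WellFoundedOn (· < ·) := fun n => hg1 (y' n)
  have hy2 : ∀ n, ¬ (Icc (y n) (y (n + 1))).WellFoundedOn (· > ·) := fun n => hg2 (y' n)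
  have hunb : ∀ c ∈ C, ∃ n, c < y n := by
    intro c hc
    by_contra! h
    obtain ⟨n, h' | h'⟩ := (hfin c hc).exists_block y hy.monotone fun n x hx =>
      ⟨hC.out (hyC n) (hyC (n + 1)) hx, hx.2.trans (h (n + 1))⟩
    · exact hy1 n h'
    · exact hy2 n h'
  have hIco : ∀ n m, Ico (y n) (y m) ⊆ C := fun n m x hx =>
    hC.out (hyC n) (hyC m) ⟨hx.1, hx.2.le⟩
  have hA : ∀ n, FinSur (Ico (y n) (y (n + 1))) := fun n =>
    (hfin _ (hyC (n + 1))).mono fun x hx => ⟨hIco n (n + 1) hx, hx.2.le⟩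
  obtain ⟨N, hN⟩ := FinSur.eventually_emb (X := fun _ => L) _ hA
  let R : Set L := {x | IsIsolatedPt x} ∪ Set.range y
  have hJC : C ∩ Ici (y N) ⊆ C := inter_subset_left
  refine ⟨C ∩ Ici (y N), hJC, hC.inter ordConnected_Ici, hIci _ (hyC N), R,
    fun x _ hx => .inl hx, ?_, ?_⟩
  · let Fit : Set (L ×ₗ ℚ) → Prop := fun t => ∀ n ≥ N, ∃ m > n, Emb t (Ico (y n) (y m))
    have hT : ∀ n ≥ N, ∃ m > n, Emb twoSidedSeq (Ico (y n) (y m)) := by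
      refine twoSidedSeq_of (Fit := fun t => ∀ n ≥ N, ∃ m > n, Emb t (Ico (y n) (y m)))
        ?_ ?_ ?_ ?_
      · exact fun s t hs ht hst => exists_emb_union hy.monotone hs ht hst
      · exact fun n _ => ⟨n + 2, by omega, (emb_of_not_wellFoundedOn_gt (hy2 n)).mono Subset.rfl
          (Icc_subset_Ico_right (hy (show n + 1 < n + 2 by omega)))⟩
      · exact fun n _ => ⟨n + 1, by omega, .of_subsingleton subsingleton_singleton
          ⟨y n, le_rfl, hy n.lt_succ_self⟩⟩
      · exact fun n _ => ⟨n + 2, by omega, (emb_of_not_wellFoundedOn_lt (hy1 n)).mono Subset.rfl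
          (Icc_subset_Ico_right (hy (show n + 1 < n + 2 by omega)))⟩
    have hblock : ∀ i ≥ N, Fit (Ins R twoSidedSeq (Ico (y i) (y (i + 1)))) := by
      intro i hi
      refine Ins.of_finite (fun s t hst ht n hn => ?_)
        (fun s t hs ht hst => exists_emb_union hy.monotone hs ht hst) ?_ ?_ ?_
      · obtain ⟨m, hm, h⟩ := ht n hn
        exact ⟨m, hm, h.mono hst Subset.rfl⟩
      · intro n hn
        obtain ⟨m, hm, h⟩ := hN i hi n
        exact ⟨m + 1, by omega, ((Ins.emb_empty _ _).trans h).mono Subset.rfl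
          (Ico_subset_Ico_left (hy.monotone hm))⟩
      · intro x _ n hn
        obtain ⟨m, hm, h⟩ := hT n hn
        exact ⟨m, hm, (Ins.emb_singleton R zero_mem_twoSidedSeq x).trans h⟩
      · refine ((hA i).finite_isolated ordConnected_Ico |>.union (finite_singleton (y i))).subset ?_
        rintro x ⟨hx | ⟨k, rfl⟩, hx'⟩
        · exact .inl ⟨hx', hx⟩
        · have h1 : i ≤ k := hy.le_iff_le.1 hx'.1
          have h2 : k < i + 1 := hy.lt_iff_lt.1 hx'.2
          exact .inr (congrArg y (by omega : k = i))
    have hnext : ∀ i n : ℕ, n ≥ N → ∃ m > n, i ≥ N →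
        Emb (Ins R twoSidedSeq (Ico (y i) (y (i + 1)))) (Ico (y n) (y m)) := by
      intro i n hn
      by_cases hi : i ≥ N
      · obtain ⟨m, hm, h⟩ := hblock i hi n hn
        exact ⟨m, hm, fun _ => h⟩
      · exact ⟨n + 1, by omega, fun h => absurd h hi⟩
    choose m hm hme using hnext
    let c : ℕ → {n // n ≥ N} := fun n => Nat.rec ⟨N, le_rfl⟩
      (fun i k => ⟨m i k k.2, k.2.trans (hm i k k.2).le⟩) n
    have hc : Monotone c := monotone_nat_of_le_succ fun n =>
      show (c n).1 ≤ (c (n + 1)).1 from (hm n (c n).1 (c n).2).le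
    have hidx : ∀ x ∈ C ∩ Ici (y N), x < y (sInf {n | x < y (n + 1)} + 1) ∧
        N ≤ sInf {n | x < y (n + 1)} ∧ y (sInf {n | x < y (n + 1)}) ≤ x := by
      intro x hx
      have hmem : x < y (sInf {n | x < y (n + 1)} + 1) := by
        obtain ⟨n, hn⟩ := hunb x hx.1
        exact Nat.sInf_mem (s := {n | x < y (n + 1)}) ⟨n, hn.trans (hy n.lt_succ_self)⟩
      have h2 : N ≤ sInf {n | x < y (n + 1)} :=
        Nat.lt_succ_iff.1 (hy.lt_iff_lt.1 (lt_of_le_of_lt hx.2 hmem))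
      refine ⟨hmem, h2, ?_⟩
      rcases h2.eq_or_lt with h | h
      · rw [← h]
        exact hx.2
      · by_contra! hlt
        obtain ⟨j, hj⟩ : ∃ j, sInf {n | x < y (n + 1)} = j + 1 :=
          ⟨_, (Nat.succ_pred (by omega)).symm⟩
        have h3 : sInf {n | x < y (n + 1)} ≤ j := Nat.sInf_le <| by
          rw [hj] at hlt
          exact hlt
        omega
    refine Emb.glue (fun p => sInf {n | (ofLex p).1 < y (n + 1)}) ?_
      (fun i => Ico (y (c i).1) (y (c (i + 1)).1)) ?_ ?_ ?_
    · intro p hp q hq hpq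
      exact Nat.sInf_le ((fst_le_fst hpq).trans_lt (hidx _ hq.1).1)
    · exact fun p hp x hx => ⟨hIco _ _ hx, (hy.monotone (c _).2).trans hx.1⟩
    · intro p hp q hq hpq a ha b hb
      exact ha.2.trans_le ((hy.monotone (hc hpq)).trans hb.1)
    · intro p hp
      refine (hme _ (c _).1 (c _).2 (hidx _ hp.1).2.1).mono (fun q hq => ?_) Subset.rfl
      have h := hidx _ hq.1.1
      rw [show sInf {n | (ofLex q).1 < y (n + 1)} = _ from hq.2] at h
      exact ⟨⟨h.2.2, h.1⟩, hq.1.2⟩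
  · intro I hI hIc hIn
    have hub : ∀ c ∈ C, ∃ i ∈ I, c < i := by
      intro c hc
      by_contra! h
      exact hIn ((hfin c hc).mono fun i hi => ⟨hJC (hI hi), h i hi⟩)
    obtain ⟨i₀, hi₀, -⟩ := hub x₀ hx₀
    obtain ⟨k, hk⟩ := hunb i₀ (hJC (hI hi₀))
    obtain ⟨i₁, hi₁, h1⟩ := hub _ (hyC (k + 2))
    have hmem : ∀ j, k ≤ j → j ≤ k + 2 → y j ∈ R ∩ I := fun j h2 h3 => ⟨.inr ⟨j, rfl⟩,
      hIc.out hi₀ hi₁ ⟨hk.le.trans (hy.monotone h2), (hy.monotone h3).trans h1.le⟩⟩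
    exact ⟨_, hmem k le_rfl (by omega), _, hmem (k + 1) (by omega) (by omega), _,
      hmem (k + 2) (by omega) le_rfl, hy k.lt_succ_self, hy (k + 1).lt_succ_self⟩

theorem exists_isCore_of_left {C : Set L} (hC : C.OrdConnected) (hn : ¬ FinSur C)
    (hfin : ∀ y ∈ C, FinSur (C ∩ Ici y)) : ∃ J ⊆ C, IsCore J := by
  obtain ⟨J, hJ, h⟩ := exists_isCore_of_right (C := OrderDual.ofDual ⁻¹' C)
    ⟨fun x hx y hy z hz => hC.out hy hx ⟨hz.2, hz.1⟩⟩ (fun h => hn (finSur_dual_iff.1 h))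
    fun y hy => (hfin (OrderDual.ofDual y) hy).dual
  exact ⟨OrderDual.toDual ⁻¹' J, fun x hx => hJ hx, h.of_dual⟩

end Insertion

theorem exists_wellFoundedOn_cofinal {β : Type*} [LinearOrder β] (Z : Set β) :
    ∃ A ⊆ Z, A.WellFoundedOn (· < ·) ∧ ∀ z ∈ Z, ∃ a ∈ A, z ≤ a := by
  refine ⟨{a ∈ Z | ∀ b ∈ Z, WellOrderingRel b a → b < a}, sep_subset _ _, ?_, fun z hz => ?_⟩
  · refine wellFoundedOn_comap (t := univ) (r' := WellOrderingRel)
      WellOrderingRel.isWellOrder.wf.wellFoundedOn id (mapsTo_univ _ _) fun x hx y hy hxy => ?_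
    by_contra h
    by_cases h' : WellOrderingRel y x
    · exact absurd hxy (hx.2 y hy.1 h').asymm
    · exact hxy.ne (Std.Trichotomous.trichotomous (r := WellOrderingRel) x y h h')
  · obtain ⟨a, ha, hmin⟩ := (WellOrderingRel.isWellOrder (α := β)).wf.has_min (Z ∩ Ici z)
      ⟨z, hz, le_rfl⟩
    exact ⟨a, ⟨ha.1, fun b hb hba => lt_of_not_ge fun hab =>
      hmin b ⟨hb, le_trans ha.2 hab⟩ hba⟩, ha.2⟩

section Spread

variable {β : Type*} [LinearOrder β]

/-- The rationals do not embed into `S`. -/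
def ScatteredOn (S : Set β) : Prop :=
  ¬ ∃ f : ℚ → β, StrictMono f ∧ ∀ q, f q ∈ S

theorem exists_rat_of_dense {D : Set β} (hD : ∀ x ∈ D, ∀ y ∈ D, x < y → ∃ z ∈ D, x < z ∧ z < y)
    {x y : β} (hx : x ∈ D) (hy : y ∈ D) (hxy : x < y) :
    ∃ f : ℚ → β, StrictMono f ∧ ∀ q, f q ∈ D ∩ Icc x y := by
  have : DenselyOrdered ↥(D ∩ Icc x y) := ⟨fun a b hab => by
    obtain ⟨z, hz, h1, h2⟩ := hD a a.2.1 b b.2.1 hab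
    exact ⟨⟨z, hz, a.2.2.1.trans h1.le, h2.le.trans b.2.2.2⟩, h1, h2⟩⟩
  have : Nontrivial ↥(D ∩ Icc x y) :=
    ⟨⟨x, hx, le_rfl, hxy.le⟩, ⟨y, hy, hxy.le, le_rfl⟩, fun h => hxy.ne (congrArg Subtype.val h)⟩
  obtain ⟨f⟩ := Order.embedding_from_countable_to_dense ℚ ↥(D ∩ Icc x y)
  exact ⟨fun q => f q, fun a b hab => f.strictMono hab, fun q => (f q).2⟩

/-- All pairs of elements of `D` in increasing order satisfy `V`. -/
def IsSpread (V : β → β → Prop) (D : Set β) : Prop :=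
  ∀ x ∈ D, ∀ y ∈ D, x < y → V x y

theorem exists_maximal_isSpread (V : β → β → Prop) {D₀ J : Set β} (hD₀ : IsSpread V D₀)
    (hJ : D₀ ⊆ J) : ∃ D, D₀ ⊆ D ∧ D ⊆ J ∧ IsSpread V D ∧
      ∀ z ∈ J, z ∉ D → ∃ x ∈ D, x < z ∧ ¬ V x z ∨ z < x ∧ ¬ V z x := by
  have hchain : ∀ c ⊆ {D | D ⊆ J ∧ IsSpread V D}, IsChain (· ⊆ ·) c → IsSpread V (⋃₀ c) := by
    rintro c hc hch x ⟨s, hs, hx⟩ y ⟨t, ht, hy⟩ hxy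
    rcases hch.total hs ht with h | h
    · exact (hc ht).2 x (h hx) y hy hxy
    · exact (hc hs).2 x hx y (h hy) hxy
  obtain ⟨D, hD, hmax⟩ := zorn_subset_nonempty {D | D ⊆ J ∧ IsSpread V D} (fun c hc hch _ =>
    ⟨⋃₀ c, ⟨sUnion_subset fun s hs => (hc hs).1, hchain c hc hch⟩,
      fun s hs => subset_sUnion_of_mem hs⟩) D₀ ⟨hJ, hD₀⟩
  refine ⟨D, hD, hmax.prop.1, hmax.prop.2, fun z hz hzD => ?_⟩
  by_contra! h
  refine hzD (hmax.le_of_ge (y := insert z D) ⟨insert_subset hz hmax.prop.1, ?_⟩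
    (subset_insert _ _) (mem_insert _ _))
  rintro x (rfl | hx) y (rfl | hy) hxy
  · exact absurd hxy (lt_irrefl _)
  · exact (h y hy).2 hxy
  · exact (h x hx).1 hxy
  · exact hmax.prop.2 x hx y hy hxy

theorem IsSpread.dense {V : β → β → Prop} {D J : Set β} (hD : IsSpread V D) (hDJ : D ⊆ J)
    (hmax : ∀ z ∈ J, z ∉ D → ∃ x ∈ D, x < z ∧ ¬ V x z ∨ z < x ∧ ¬ V z x)
    (hlt : ∀ a b, V a b → a < b) (hmono : ∀ a b a' b', a' ≤ a → b ≤ b' → V a b → V a' b')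
    (hsplit : ∀ a ∈ J, ∀ b ∈ J, V a b → ∃ c ∈ J, V a c ∧ V c b) :
    ∀ x ∈ D, ∀ y ∈ D, x < y → ∃ z ∈ D, x < z ∧ z < y := by
  intro x hx y hy hxy
  obtain ⟨c, hc, h1, h2⟩ := hsplit x (hDJ hx) y (hDJ hy) (hD x hx y hy hxy)
  by_contra! h
  by_cases hcD : c ∈ D
  · exact absurd (hlt _ _ h2) (not_lt.2 (h c hcD (hlt _ _ h1)))
  obtain ⟨w, hw, ⟨hwc, hn⟩ | ⟨hwc, hn⟩⟩ := hmax c hc hcD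
  · refine hn (hmono x c w c (not_lt.1 fun hxw => ?_) le_rfl h1)
    exact absurd (hwc.trans (hlt _ _ h2)) (not_lt.2 (h w hw hxw))
  · refine hn (hmono c y c w le_rfl (not_lt.1 fun hwy => ?_) h2)
    exact absurd hwy (not_lt.2 (h w hw ((hlt _ _ h1).trans hwc)))

end Spread

section Room

variable {α β : Type*} [LinearOrder α] [LinearOrder β]

/-- Disjoint intervals satisfying `V`, inside `[a, b]`, can be assigned monotonically to the
elements of `Z`. -/
def Room (V : α → α → Prop) (Z : Set β) (a b : α) : Prop :=
  ∃ g : β → α × α, (∀ z ∈ Z, V (g z).1 (g z).2 ∧ a ≤ (g z).1 ∧ (g z).2 ≤ b) ∧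
    ∀ z ∈ Z, ∀ w ∈ Z, z < w → (g z).2 ≤ (g w).1

/-- `Z` has room in every interval satisfying `V`. -/
def Roomy (V : α → α → Prop) (Z : Set β) : Prop :=
  ∀ a b, V a b → Room V Z a b

/-- Copies of the well-ordered subsets of `Z`, spread with respect to `V`, exist in all intervals
satisfying `V`. -/
def HasSpreads (V : α → α → Prop) (Z : Set β) : Prop :=
  ∀ A ⊆ Z, A.WellFoundedOn (· < ·) → ∀ a b, V a b →
    ∃ h : β → α, (∀ x ∈ A, h x ∈ Icc a b) ∧ ∀ x ∈ A, ∀ y ∈ A, x < y → V (h x) (h y)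

variable {V : α → α → Prop}

theorem HasSpreads.mono {Z Z' : Set β} (h : HasSpreads V Z) (hZ : Z' ⊆ Z) : HasSpreads V Z' :=
  fun A hA => h A (hA.trans hZ)

theorem Roomy.mono {Z Z' : Set β} (h : Roomy V Z) (hZ : Z' ⊆ Z) : Roomy V Z' := by
  intro a b hab
  obtain ⟨g, h1, h2⟩ := h a b hab
  exact ⟨g, fun z hz => h1 z (hZ hz), fun z hz z' hz' => h2 z (hZ hz) z' (hZ hz')⟩

theorem Roomy.union (hsplit : ∀ a b, V a b → ∃ c, V a c ∧ V c b) (hlt : ∀ a b, V a b → a < b)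
    {Z Z' : Set β} (h : Roomy V Z) (h' : Roomy V Z') (hZ : ∀ a ∈ Z, ∀ b ∈ Z', a < b) :
    Roomy V (Z ∪ Z') := by
  classical
  intro a b hab
  obtain ⟨c, hac, hcb⟩ := hsplit a b hab
  obtain ⟨g, h1, h2⟩ := h a c hac
  obtain ⟨g', h1', h2'⟩ := h' c b hcb
  have hn : ∀ z ∈ Z', z ∉ Z := fun z hz hz' => (hZ z hz' z hz).false
  refine ⟨fun z => if z ∈ Z then g z else g' z, ?_, ?_⟩
  · rintro z (hz | hz)
    · simpa [hz] using ⟨(h1 z hz).1, (h1 z hz).2.1, (h1 z hz).2.2.trans (hlt _ _ hcb).le⟩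
    · simpa [hn z hz] using ⟨(h1' z hz).1, (hlt _ _ hac).le.trans (h1' z hz).2.1, (h1' z hz).2.2⟩
  · rintro z (hz | hz) z' (hz' | hz') hlt
    · simpa [hz, hz'] using h2 z hz z' hz' hlt
    · simpa [hz, hn z' hz'] using (h1 z hz).2.2.trans (h1' z' hz').2.1
    · exact absurd hlt (hZ _ hz' _ hz).asymm
    · simpa [hn z hz, hn z' hz'] using h2' z hz z' hz' hlt

theorem Roomy.dual {Z : Set β} (h : Roomy V Z) :
    Roomy (fun a b : αᵒᵈ => V b.ofDual a.ofDual) (OrderDual.ofDual ⁻¹' Z) := by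
  intro a b hab
  obtain ⟨g, h1, h2⟩ := h _ _ hab
  exact ⟨fun z => (OrderDual.toDual (g z.ofDual).2, OrderDual.toDual (g z.ofDual).1),
    fun z hz => ⟨(h1 _ hz).1, (h1 _ hz).2.2, (h1 _ hz).2.1⟩,
    fun z hz z' hz' hlt => h2 _ hz' _ hz hlt⟩

theorem Roomy.of_cofinal (hlt : ∀ a b, V a b → a < b) {Z : Set β} (hZ : HasSpreads V Z)
    (h : ∀ z ∈ Z, Roomy V (Z ∩ Iic z)) : Roomy V Z := by
  by_cases hm : ∃ m ∈ Z, ∀ z ∈ Z, z ≤ m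
  · obtain ⟨m, hm, hmax⟩ := hm
    exact (h m hm).mono fun z hz => ⟨hz, hmax z hz⟩
  push Not at hm
  intro a b hab
  obtain ⟨A, hAZ, hA, hcof⟩ := exists_wellFoundedOn_cofinal Z
  obtain ⟨e, he, heV⟩ := hZ A hAZ hA a b hab
  have hleast : ∀ P : Set β, (P ∩ A).Nonempty → ∃ x ∈ P ∩ A, ∀ y ∈ P ∩ A, x ≤ y := by
    intro P hP
    obtain ⟨x, hx, hmin⟩ := (hA.subset (s := P ∩ A) inter_subset_right).exists_minimal hP
    exact ⟨x, hx, fun y hy => le_of_not_gt fun hlt => absurd (hmin hy hlt.le) (not_le.2 hlt)⟩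
  have hp : ∀ z : β, ∃ x, z ∈ Z → (z ≤ x ∧ x ∈ A) ∧ ∀ y ∈ A, z ≤ y → x ≤ y := by
    intro z
    by_cases hz : z ∈ Z
    · obtain ⟨y, hy, hzy⟩ := hcof z hz
      obtain ⟨x, hx, hmin⟩ := hleast (Ici z) ⟨y, hzy, hy⟩
      exact ⟨x, fun _ => ⟨hx, fun y hy hzy => hmin y ⟨hzy, hy⟩⟩⟩
    · exact ⟨z, fun h => absurd h hz⟩
  have hs : ∀ z : β, ∃ x, z ∈ Z → (z < x ∧ x ∈ A) ∧ ∀ y ∈ A, z < y → x ≤ y := by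
    intro z
    by_cases hz : z ∈ Z
    · obtain ⟨w, hw, hzw⟩ := hm z hz
      obtain ⟨y, hy, hwy⟩ := hcof w hw
      obtain ⟨x, hx, hmin⟩ := hleast (Ioi z) ⟨y, hzw.trans_le hwy, hy⟩
      exact ⟨x, fun _ => ⟨hx, fun y hy hzy => hmin y ⟨hzy, hy⟩⟩⟩
    · exact ⟨z, fun h => absurd h hz⟩
  choose p hp using hp
  choose s hs using hs
  have hsV : ∀ x ∈ A, V (e x) (e (s x)) := fun x hx =>
    heV x hx _ (hs x (hAZ hx)).1.2 (hs x (hAZ hx)).1.1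
  have hg : ∀ x, ∃ g : β → α × α, x ∈ A →
      (∀ z ∈ Z ∩ Iic x, V (g z).1 (g z).2 ∧ e x ≤ (g z).1 ∧ (g z).2 ≤ e (s x)) ∧
      ∀ z ∈ Z ∩ Iic x, ∀ z' ∈ Z ∩ Iic x, z < z' → (g z).2 ≤ (g z').1 := by
    intro x
    by_cases hx : x ∈ A
    · obtain ⟨g, hg⟩ := h x (hAZ hx) _ _ (hsV x hx)
      exact ⟨g, fun _ => hg⟩
    · exact ⟨fun _ => (a, b), fun h => absurd h hx⟩
  choose g hg using hg
  have hpA : ∀ z ∈ Z, p z ∈ A := fun z hz => (hp z hz).1.2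
  have hmem : ∀ z ∈ Z, z ∈ Z ∩ Iic (p z) := fun z hz => ⟨hz, (hp z hz).1.1⟩
  refine ⟨fun z => g (p z) z, fun z hz => ?_, fun z hz z' hz' hzz' => ?_⟩
  · obtain ⟨h1, h2, h3⟩ := (hg _ (hpA z hz)).1 z (hmem z hz)
    exact ⟨h1, (he _ (hpA z hz)).1.trans h2,
      h3.trans (he _ (hs _ (hAZ (hpA z hz))).1.2).2⟩
  · have hle : p z ≤ p z' := (hp z hz).2 _ (hpA z' hz') (hzz'.le.trans (hp z' hz').1.1)
    rcases hle.eq_or_lt with heq | hlt'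
    · have := (hg _ (hpA z' hz')).2 z (heq ▸ hmem z hz) z' (hmem z' hz') hzz'
      simpa only [heq] using this
    · have h1 := ((hg _ (hpA z hz)).1 z (hmem z hz)).2.2
      have h2 := ((hg _ (hpA z' hz')).1 z' (hmem z' hz')).2.1
      have h3 : s (p z) ≤ p z' := (hs _ (hAZ (hpA z hz))).2 _ (hpA z' hz') hlt'
      refine h1.trans (le_trans ?_ h2)
      rcases h3.eq_or_lt with heq | hlt''
      · rw [heq]
      · exact (hlt _ _ (heV _ (hs _ (hAZ (hpA z hz))).1.2 _ (hpA z' hz') hlt'')).le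

theorem Roomy.of_coinitial (hlt : ∀ a b, V a b → a < b) {Z : Set β}
    (hZ : HasSpreads (fun a b : αᵒᵈ => V b.ofDual a.ofDual) (OrderDual.ofDual ⁻¹' Z))
    (h : ∀ z ∈ Z, Roomy V (Z ∩ Ici z)) : Roomy V Z := by
  have h1 : Roomy (fun a b : αᵒᵈ => V b.ofDual a.ofDual) (OrderDual.ofDual ⁻¹' Z) :=
    Roomy.of_cofinal (fun x y h => hlt y.ofDual x.ofDual h) hZ
      fun z hz => (h (OrderDual.ofDual z) hz).dual
  exact h1.dual

theorem Roomy.of_scatteredOn (hlt : ∀ a b, V a b → a < b)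
    (hsplit : ∀ a b, V a b → ∃ c, V a c ∧ V c b) {Z : Set β} (hZ : HasSpreads V Z)
    (hZ' : HasSpreads (fun a b : αᵒᵈ => V b.ofDual a.ofDual) (OrderDual.ofDual ⁻¹' Z))
    (hsc : ScatteredOn Z) : Roomy V Z := by
  have hcof : ∀ {Y}, Y ⊆ Z → (∀ y ∈ Y, Roomy V (Y ∩ Iic y)) → Roomy V Y := fun hY =>
    .of_cofinal hlt (hZ.mono hY)
  have hcoi : ∀ {Y}, Y ⊆ Z → (∀ y ∈ Y, Roomy V (Y ∩ Ici y)) → Roomy V Y := fun hY =>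
    .of_coinitial hlt (hZ'.mono (preimage_mono hY))
  let U : β → β → Prop := fun x y => x < y ∧ ¬ Roomy V (Z ∩ Icc x y)
  have hUsplit : ∀ x ∈ Z, ∀ y ∈ Z, U x y → ∃ c ∈ Z, U x c ∧ U c y := by
    rintro x hx y hy ⟨hxy, hn⟩
    by_contra! h
    refine hn ?_
    let P : Set β := {c ∈ Z ∩ Icc x y | Roomy V (Z ∩ Icc x c)}
    let Q : Set β := {c ∈ Z ∩ Icc x y | ¬ Roomy V (Z ∩ Icc x c)}
    have hP : Roomy V P := hcof (fun c hc => hc.1.1) fun c hc => hc.2.mono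
      fun z hz => ⟨hz.1.1.1, hz.1.1.2.1, hz.2⟩
    have hQ : Roomy V Q := hcoi (fun c hc => hc.1.1) fun c hc => by
      rcases hc.1.2.1.eq_or_lt with rfl | hxc
      · refine absurd ?_ hc.2
        refine hcof inter_subset_left fun z hz => ?_
        have h1 : (Z ∩ Icc x x ∩ Iic z).Subsingleton :=
          (subsingleton_Icc_of_ge le_rfl).anti fun w hw => hw.1.2
        exact fun a b hab => ⟨fun _ => (a, b), fun _ _ => ⟨hab, le_rfl, le_rfl⟩,
          fun w hw w' hw' hlt => absurd (h1 hw hw') hlt.ne⟩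
      · rcases hc.1.2.2.eq_or_lt with rfl | hcy
        · have h1 : (Q ∩ Ici c).Subsingleton :=
            (subsingleton_Icc_of_ge (le_refl c)).anti fun w hw => ⟨hw.2, hw.1.1.2.2⟩
          exact fun a b hab => ⟨fun _ => (a, b), fun _ _ => ⟨hab, le_rfl, le_rfl⟩,
            fun w hw w' hw' hlt => absurd (h1 hw hw') hlt.ne⟩
        · have h1 : Roomy V (Z ∩ Icc c y) := by
            by_contra hn'
            exact h c hc.1.1 ⟨hxc, hc.2⟩ ⟨hcy, hn'⟩
          exact h1.mono fun z hz => ⟨hz.1.1.1, hz.2, hz.1.1.2.2⟩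
    refine (Roomy.union hsplit hlt hP hQ ?_).mono fun c hc => ?_
    · intro p hp q hq
      by_contra! hqp
      exact hq.2 (hp.2.mono fun z hz => ⟨hz.1, hz.2.1, hz.2.2.trans hqp⟩)
    · by_cases hc' : Roomy V (Z ∩ Icc x c)
      · exact .inl ⟨hc, hc'⟩
      · exact .inr ⟨hc, hc'⟩
  have hall : ∀ x ∈ Z, ∀ y ∈ Z, x < y → Roomy V (Z ∩ Icc x y) := by
    intro x hx y hy hxy
    by_contra hn
    obtain ⟨D, hD₀, hDZ, hD, hmax⟩ := exists_maximal_isSpread U (D₀ := {x, y}) (J := Z)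
      (by
        rintro _ (rfl | rfl) _ (rfl | rfl) h
        · exact absurd h (lt_irrefl _)
        · exact ⟨h, hn⟩
        · exact absurd h hxy.asymm
        · exact absurd h (lt_irrefl _))
      (by
        rintro _ (rfl | rfl)
        · exact hx
        · exact hy)
    obtain ⟨f, hf, hfD⟩ := exists_rat_of_dense (hD.dense hDZ hmax (fun _ _ h => h.1)
      (fun a b a' b' ha hb h => ⟨ha.trans_lt (h.1.trans_le hb), fun h' => h.2 (h'.mono
        fun z hz => ⟨hz.1, ha.trans hz.2.1, hz.2.2.trans hb⟩)⟩) hUsplit)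
      (hD₀ (.inl rfl)) (hD₀ (.inr rfl)) hxy
    exact hsc ⟨f, hf, fun q => hDZ (hfD q).1⟩
  have hall' : ∀ x ∈ Z, ∀ y ∈ Z, Roomy V (Z ∩ Icc x y) := by
    intro x hx y hy
    rcases lt_or_ge x y with h | h
    · exact hall x hx y hy h
    · exact fun a b hab => ⟨fun _ => (a, b), fun _ _ => ⟨hab, le_rfl, le_rfl⟩,
        fun w hw w' hw' hlt => absurd ((subsingleton_Icc_of_ge h) hw.2 hw'.2) hlt.ne⟩
  refine hcof Subset.rfl fun y hy => hcoi inter_subset_left fun x hx =>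
    (hall' x hx.1 y hy).mono fun z hz => ⟨hz.1.1, hz.2, hz.1.2⟩

end Room

theorem scatteredOn_of_isSpread {β : Type*} [LinearOrder β] {S D : Set β} (hS : ScatteredOn S)
    (hD : IsSpread (fun x y => x < y ∧ (Icc x y ∩ S).Nonempty) D) : ScatteredOn D := by
  rintro ⟨f, hf, hfD⟩
  have : Countable (ℚ ×ₗ Fin 2) := inferInstanceAs (Countable (ℚ × Fin 2))
  obtain ⟨e⟩ := Order.embedding_from_countable_to_dense (ℚ ×ₗ Fin 2) ℚ
  have h01 : ∀ q : ℚ, e (toLex (q, 0)) < e (toLex (q, 1)) := fun q =>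
    e.strictMono (Prod.Lex.lt_iff.2 (.inr ⟨rfl, by simp⟩))
  choose g hg using fun q : ℚ => (hD _ (hfD _) _ (hfD _) (hf (h01 q))).2
  refine hS ⟨g, fun p q hpq => ?_, fun q => (hg q).2⟩
  have h2 : e (toLex (p, 1)) < e (toLex (q, 0)) := e.strictMono (Prod.Lex.lt_iff.2 (.inl hpq))
  exact (hg p).1.2.trans_lt ((hf h2).trans_le (hg q).1.1)

section Room

variable {α β : Type*} [LinearOrder α] [LinearOrder β] {V : α → α → Prop}

theorem HasSpreads.exists_refinement (hlt : ∀ a b, V a b → a < b)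
    (hsplit : ∀ a b, V a b → ∃ c, V a c ∧ V c b) {Z S : Set β} (hZ : HasSpreads V Z)
    (hZ' : HasSpreads (fun a b : αᵒᵈ => V b.ofDual a.ofDual) (OrderDual.ofDual ⁻¹' Z))
    (hS : ScatteredOn S) {a b : α} (hab : V a b) :
    ∃ g : β → α × α, (∀ z ∈ Z, V (g z).1 (g z).2 ∧ a ≤ (g z).1 ∧ (g z).2 ≤ b) ∧
      (∀ z ∈ Z, ∀ z' ∈ Z, z < z' → g z = g z' ∨ (g z).2 ≤ (g z').1) ∧
      ∀ z ∈ Z, ∀ z' ∈ Z, z < z' → (Icc z z' ∩ S).Nonempty → (g z).2 ≤ (g z').1 := by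
  obtain ⟨D, -, hDZ, hD, hmax⟩ := exists_maximal_isSpread
    (fun x y => x < y ∧ (Icc x y ∩ S).Nonempty) (D₀ := ∅) (fun x hx => absurd hx (notMem_empty x))
    (empty_subset Z)
  obtain ⟨k, hk, hk'⟩ := Roomy.of_scatteredOn hlt hsplit (hZ.mono hDZ)
    (hZ'.mono (preimage_mono hDZ)) (scatteredOn_of_isSpread hS hD) a b hab
  have hr : ∀ z, ∃ r, z ∈ Z → r ∈ D ∧ (r = z ∨ ∀ s ∈ S, (r ≤ s → z < s) ∧ (z ≤ s → r < s)) := by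
    intro z
    by_cases hzD : z ∈ D
    · exact ⟨z, fun _ => ⟨hzD, .inl rfl⟩⟩
    by_cases hz : z ∈ Z
    · obtain ⟨x, hx, ⟨hxz, h⟩ | ⟨hxz, h⟩⟩ := hmax z hz hzD
      · refine ⟨x, fun _ => ⟨hx, .inr fun s hs => ⟨fun hxs => ?_, fun hzs => hxz.trans_le hzs⟩⟩⟩
        exact lt_of_not_ge fun hsz => h ⟨hxz, s, ⟨hxs, hsz⟩, hs⟩
      · refine ⟨x, fun _ => ⟨hx, .inr fun s hs => ⟨fun hxs => hxz.trans_le hxs, fun hzs => ?_⟩⟩⟩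
        exact lt_of_not_ge fun hsx => h ⟨hxz, s, ⟨hzs, hsx⟩, hs⟩
    · exact ⟨z, fun h => absurd h hz⟩
  choose r hr using hr
  have hmono : ∀ z ∈ Z, ∀ z' ∈ Z, z < z' → r z ≤ r z' := by
    intro z hz z' hz' hzz'
    by_contra! hlt
    obtain ⟨-, s, ⟨h1, h2⟩, hs⟩ := hD _ (hr z' hz').1 _ (hr z hz).1 hlt
    have h3 := (hr z hz).2
    have h4 := (hr z' hz').2
    grind
  refine ⟨fun z => k (r z), fun z hz => hk _ (hr z hz).1, fun z hz z' hz' hzz' => ?_,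
    fun z hz z' hz' hzz' => ?_⟩
  · rcases (hmono z hz z' hz' hzz').eq_or_lt with h | h
    · exact .inl (congrArg k h)
    · exact .inr (hk' _ (hr z hz).1 _ (hr z' hz').1 h)
  · rintro ⟨s, ⟨h1, h2⟩, hs⟩
    refine hk' _ (hr z hz).1 _ (hr z' hz').1 ((hmono z hz z' hz' hzz').lt_of_ne fun heq => ?_)
    have h3 := (hr z hz).2
    have h4 := (hr z' hz').2
    grind

theorem Roomy.of_iUnion_scatteredOn (hlt : ∀ a b, V a b → a < b)
    (hsplit : ∀ a b, V a b → ∃ c, V a c ∧ V c b) {Z : Set β} (hZ : HasSpreads V Z)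
    (hZ' : HasSpreads (fun a b : αᵒᵈ => V b.ofDual a.ofDual) (OrderDual.ofDual ⁻¹' Z))
    {S : ℕ → Set β} (hS : ∀ n, ScatteredOn (S n)) (hcov : Z ⊆ ⋃ n, S n) : Roomy V Z := by
  intro a b hab
  let P : (β → α × α) → Prop := fun g =>
    (∀ z ∈ Z, V (g z).1 (g z).2 ∧ a ≤ (g z).1 ∧ (g z).2 ≤ b) ∧
      ∀ z ∈ Z, ∀ z' ∈ Z, z < z' → g z = g z' ∨ (g z).2 ≤ (g z').1
  have hstep : ∀ (g : {g // P g}) (n : ℕ), ∃ g' : {g // P g},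
      (∀ z ∈ Z, (g.1 z).1 ≤ (g'.1 z).1 ∧ (g'.1 z).2 ≤ (g.1 z).2) ∧
      ∀ z ∈ Z, ∀ z' ∈ Z, z < z' → (Icc z z' ∩ S n).Nonempty → (g'.1 z).2 ≤ (g'.1 z').1 := by
    rintro ⟨g, hg, hg'⟩ n
    have : ∀ c : α × α, ∃ h : β → α × α, V c.1 c.2 →
        (∀ z ∈ Z ∩ g ⁻¹' {c}, V (h z).1 (h z).2 ∧ c.1 ≤ (h z).1 ∧ (h z).2 ≤ c.2) ∧
        (∀ z ∈ Z ∩ g ⁻¹' {c}, ∀ z' ∈ Z ∩ g ⁻¹' {c}, z < z' → h z = h z' ∨ (h z).2 ≤ (h z').1) ∧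
        ∀ z ∈ Z ∩ g ⁻¹' {c}, ∀ z' ∈ Z ∩ g ⁻¹' {c}, z < z' → (Icc z z' ∩ S n).Nonempty →
          (h z).2 ≤ (h z').1 := by
      intro c
      by_cases hc : V c.1 c.2
      · obtain ⟨h, hh⟩ := HasSpreads.exists_refinement hlt hsplit
          (hZ.mono (inter_subset_left (t := g ⁻¹' {c})))
          (hZ'.mono (preimage_mono inter_subset_left)) (hS n) hc
        exact ⟨h, fun _ => hh⟩
      · exact ⟨fun _ => c, fun h => absurd h hc⟩
    choose h hh using this
    have hz : ∀ z ∈ Z, V (h (g z) z).1 (h (g z) z).2 ∧ (g z).1 ≤ (h (g z) z).1 ∧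
        (h (g z) z).2 ≤ (g z).2 := fun z hz => (hh _ (hg z hz).1).1 z ⟨hz, rfl⟩
    refine ⟨⟨fun z => h (g z) z, fun z hzZ => ⟨(hz z hzZ).1, (hg z hzZ).2.1.trans (hz z hzZ).2.1,
      (hz z hzZ).2.2.trans (hg z hzZ).2.2⟩, fun z hzZ z' hzZ' hzz' => ?_⟩,
      fun z hzZ => (hz z hzZ).2, fun z hzZ z' hzZ' hzz' hs => ?_⟩
    · rcases hg' z hzZ z' hzZ' hzz' with heq | hle
      · have := (hh _ (hg z hzZ).1).2.1 z ⟨hzZ, rfl⟩ z' ⟨hzZ', heq.symm⟩ hzz'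
        simpa only [← heq] using this
      · exact .inr ((hz z hzZ).2.2.trans (hle.trans (hz z' hzZ').2.1))
    · rcases hg' z hzZ z' hzZ' hzz' with heq | hle
      · have := (hh _ (hg z hzZ).1).2.2 z ⟨hzZ, rfl⟩ z' ⟨hzZ', heq.symm⟩ hzz' hs
        simpa only [← heq] using this
      · exact (hz z hzZ).2.2.trans (hle.trans (hz z' hzZ').2.1)
  choose next hnext hsep using hstep
  let g : ℕ → {g // P g} := fun n => Nat.rec
    ⟨fun _ => (a, b), fun _ _ => ⟨hab, le_rfl, le_rfl⟩, fun _ _ _ _ _ => .inl rfl⟩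
    (fun n g => next g n) n
  have hmono₁ : ∀ z ∈ Z, Monotone fun n => ((g n).1 z).1 := fun z hz =>
    monotone_nat_of_le_succ fun n => (hnext (g n) n z hz).1
  have hmono₂ : ∀ z ∈ Z, Antitone fun n => ((g n).1 z).2 := fun z hz =>
    antitone_nat_of_succ_le fun n => (hnext (g n) n z hz).2
  have hn : ∀ z, ∃ n, z ∈ Z → z ∈ S n := by
    intro z
    by_cases hz : z ∈ Z
    · obtain ⟨n, hn⟩ := mem_iUnion.1 (hcov hz)
      exact ⟨n, fun _ => hn⟩
    · exact ⟨0, fun h => absurd h hz⟩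
  choose n hn using hn
  refine ⟨fun z => (g (n z + 1)).1 z, fun z hz => (g (n z + 1)).2.1 z hz,
    fun z hz z' hz' hzz' => ?_⟩
  rcases le_total (n z) (n z') with h | h
  · have h1 := hsep (g (n z)) (n z) z hz z' hz' hzz' ⟨z, ⟨le_rfl, hzz'.le⟩, hn z hz⟩
    exact h1.trans (hmono₁ z' hz' (Nat.succ_le_succ h))
  · have h1 := hsep (g (n z')) (n z') z hz z' hz' hzz' ⟨z', ⟨hzz'.le, le_rfl⟩, hn z' hz'⟩
    exact (hmono₂ z hz (Nat.succ_le_succ h)).trans h1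

end Room

section Core

variable {L : Type v} [LinearOrder L]

theorem FinSur.of_subset_union {s t t' : Set L} (ht : FinSur t) (ht' : FinSur t') {c : L}
    (h1 : s ∩ Iio c ⊆ t) (h2 : s ∩ Ici c ⊆ t') : FinSur s := by
  refine (FinSur.union (ht.mono h1) (ht'.mono h2)
    fun a ha b hb => lt_of_lt_of_le ha.2 hb.2).mono fun x hx => ?_
  rcases lt_or_ge x c with h | h
  · exact .inl ⟨hx, h⟩
  · exact .inr ⟨hx, h⟩

theorem FinSur.Icc_trans {a b c : L} (h1 : FinSur (Icc a c)) (h2 : FinSur (Icc c b)) :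
    FinSur (Icc a b) :=
  h1.of_subset_union h2 (c := c) (fun _ hx => ⟨hx.1.1, le_of_lt hx.2⟩) fun _ hx => ⟨hx.2, hx.1.2⟩

theorem lt_of_not_finSur_Icc {a b : L} (h : ¬ FinSur (Icc a b)) : a < b := by
  by_contra hab
  exact h (.of_subsingleton (subsingleton_Icc_of_ge (not_lt.1 hab)))

theorem not_finSur_Icc_mono {a b a' b' : L} (ha : a' ≤ a) (hb : b ≤ b') (h : ¬ FinSur (Icc a b)) :
    ¬ FinSur (Icc a' b') :=
  fun h' => h (h'.mono (Icc_subset_Icc ha hb))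

/-- The points on either side of `x` at finite-surordinal distance from `x` form a finite sum of
surordinals and reversed surordinals. -/
def HasSmallClasses (I : Set L) : Prop :=
  ∀ x ∈ I, FinSur {y ∈ I | x ≤ y ∧ FinSur (Icc x y)} ∧ FinSur {y ∈ I | y ≤ x ∧ FinSur (Icc y x)}

theorem HasSmallClasses.mono {I I' : Set L} (h : HasSmallClasses I) (hI : I' ⊆ I) :
    HasSmallClasses I' :=
  fun x hx => ⟨(h x (hI hx)).1.mono fun _ hy => ⟨hI hy.1, hy.2⟩,
    (h x (hI hx)).2.mono fun _ hy => ⟨hI hy.1, hy.2⟩⟩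

theorem exists_isCore_of_not_hasSmallClasses {I : Set L} (hI : I.OrdConnected)
    (h : ¬ HasSmallClasses I) : ∃ J ⊆ I, IsCore J := by
  simp only [HasSmallClasses, not_forall, not_and_or] at h
  obtain ⟨x, hx, h | h⟩ := h
  · obtain ⟨J, hJ, hJc⟩ := exists_isCore_of_right
      (C := {y ∈ I | x ≤ y ∧ FinSur (Icc x y)}) ⟨fun y hy z hz w hw => ⟨hI.out hy.1 hz.1 hw,
        hy.2.1.trans hw.1, hz.2.2.mono (Icc_subset_Icc_right hw.2)⟩⟩ h
      fun y hy => hy.2.2.mono fun z hz => ⟨hz.1.2.1, hz.2⟩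
    exact ⟨J, hJ.trans (sep_subset _ _), hJc⟩
  · obtain ⟨J, hJ, hJc⟩ := exists_isCore_of_left
      (C := {y ∈ I | y ≤ x ∧ FinSur (Icc y x)}) ⟨fun y hy z hz w hw => ⟨hI.out hy.1 hz.1 hw,
        hw.2.trans hz.2.1, hy.2.2.mono (Icc_subset_Icc_left hw.1)⟩⟩ h
      fun y hy => hy.2.2.mono fun z hz => ⟨hz.2, hz.1.2.1⟩
    exact ⟨J, hJ.trans (sep_subset _ _), hJc⟩

theorem HasSmallClasses.exists_not_finSur_Icc {I : Set L} (h : HasSmallClasses I)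
    (hn : ¬ FinSur I) : ∃ a ∈ I, ∃ b ∈ I, ¬ FinSur (Icc a b) := by
  by_contra! hf
  rcases I.eq_empty_or_nonempty with rfl | ⟨x, hx⟩
  · exact hn (.of_subsingleton subsingleton_empty)
  · exact hn ((h x hx).2.of_subset_union (h x hx).1 (c := x)
      (fun y hy => ⟨hy.1, le_of_lt hy.2, hf y hy.1 x hx⟩) fun y hy => ⟨hy.1, hy.2, hf x hx y hy.1⟩)

theorem HasSmallClasses.split {I : Set L} (h : HasSmallClasses I) (hI : I.OrdConnected) {a b : L}
    (ha : a ∈ I) (hb : b ∈ I) (hn : ¬ FinSur (Icc a b)) :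
    ∃ c, ¬ FinSur (Icc a c) ∧ ¬ FinSur (Icc c b) := by
  by_contra! hf
  refine hn (((h a ha).1.union ((h b hb).2.mono (s := {y ∈ Icc a b | ¬ FinSur (Icc a y)}) ?_)
    fun x hx y hy => ?_).mono (s := Icc a b) fun y hy => ?_)
  · exact fun y hy => ⟨hI.out ha hb hy.1, hy.1.2, hf y hy.2⟩
  · exact lt_of_not_ge fun hyx => hy.2 (hx.2.2.mono (Icc_subset_Icc_right hyx))
  · by_cases h' : FinSur (Icc a y)
    · exact .inl ⟨hI.out ha hb hy, hy.1, h'⟩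
    · exact .inr ⟨hy, h'⟩

theorem exists_stable {I : Set L} (hI : I.OrdConnected) (T : L → L → Set L → Prop)
    (hT : ∀ a b a' b' A B, a' ≤ a → b ≤ b' → Emb A B → T a b B → T a' b' A)
    {a b : L} (ha : a ∈ I) (hb : b ∈ I) (hab : ¬ FinSur (Icc a b)) :
    ∃ a' ∈ I, ∃ b' ∈ I, ¬ FinSur (Icc a' b') ∧ ∀ c d, a' ≤ c → d ≤ b' → ¬ FinSur (Icc c d) →
      ∀ A, FinSur A → T a' b' A → T c d A := by
  by_contra! h
  have hstep : ∀ v : {v : L × L // v.1 ∈ I ∧ v.2 ∈ I ∧ ¬ FinSur (Icc v.1 v.2)},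
      ∃ w : {v : L × L // v.1 ∈ I ∧ v.2 ∈ I ∧ ¬ FinSur (Icc v.1 v.2)},
        v.1.1 ≤ w.1.1 ∧ w.1.2 ≤ v.1.2 ∧
        ∃ A, FinSur A ∧ T v.1.1 v.1.2 A ∧ ¬ T w.1.1 w.1.2 A := by
    rintro ⟨v, h1, h2, h3⟩
    obtain ⟨c, d, hc, hd, hcd, A, hA⟩ := h _ h1 _ h2 h3
    have hlt := (lt_of_not_finSur_Icc hcd).le
    exact ⟨⟨(c, d), hI.out h1 h2 ⟨hc, hlt.trans hd⟩, hI.out h1 h2 ⟨hc.trans hlt, hd⟩, hcd⟩, hc, hd,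
      A, hA⟩
  choose w hw1 hw2 A hA1 hA2 hA3 using hstep
  let s : ℕ → {v : L × L // v.1 ∈ I ∧ v.2 ∈ I ∧ ¬ FinSur (Icc v.1 v.2)} :=
    fun n => Nat.rec ⟨(a, b), ha, hb, hab⟩ (fun _ v => w v) n
  have hs1 : Monotone fun n => (s n).1.1 := monotone_nat_of_le_succ fun n => hw1 (s n)
  have hs2 : Antitone fun n => (s n).1.2 := antitone_nat_of_succ_le fun n => hw2 (s n)
  have : Nonempty L := ⟨a⟩
  obtain ⟨m, n, hmn, he⟩ := FinSur.wellQuasiOrdered (X := fun _ => L) (fun n => A (s n))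
    fun n => hA1 (s n)
  exact hA3 (s m) (hT _ _ _ _ _ _ (hs1 (Nat.succ_le_of_lt hmn)) (hs2 (Nat.succ_le_of_lt hmn)) he
    (hA2 (s n)))

theorem exists_bistable {I : Set L} (hI : I.OrdConnected) (T T' : L → L → Set L → Prop)
    (hT : ∀ a b a' b' A B, a' ≤ a → b ≤ b' → Emb A B → T a b B → T a' b' A)
    (hT' : ∀ a b a' b' A B, a' ≤ a → b ≤ b' → Emb A B → T' a b B → T' a' b' A)
    {a b : L} (ha : a ∈ I) (hb : b ∈ I) (hab : ¬ FinSur (Icc a b)) :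
    ∃ a' ∈ I, ∃ b' ∈ I, ¬ FinSur (Icc a' b') ∧ ∀ c d, a' ≤ c → d ≤ b' → ¬ FinSur (Icc c d) →
      ∀ A, FinSur A → (T a' b' A → T c d A) ∧ (T' a' b' A → T' c d A) := by
  obtain ⟨a₁, ha₁, b₁, hb₁, hab₁, h₁⟩ := exists_stable hI T hT ha hb hab
  have hlt := (lt_of_not_finSur_Icc hab₁).le
  obtain ⟨a₂, ha₂, b₂, hb₂, hab₂, h₂⟩ := exists_stable (I := Icc a₁ b₁) ordConnected_Icc T' hT'
    (left_mem_Icc.2 hlt) (right_mem_Icc.2 hlt) hab₁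
  exact ⟨a₂, hI.out ha₁ hb₁ ha₂, b₂, hI.out ha₁ hb₁ hb₂, hab₂, fun c d hc hd hcd A hA =>
    ⟨fun h => h₁ c d (ha₂.1.trans hc) (hd.trans hb₂.2) hcd A hA
      (hT _ _ _ _ _ _ ha₂.1 hb₂.2 (.of_subset Subset.rfl) h), h₂ c d hc hd hcd A hA⟩⟩

/-- A copy of `A` in `[a, b]` whose points are pairwise far apart. -/
def SpreadEmb (a b : L) (A : Set L) : Prop :=
  ∃ f : L → L, (∀ x ∈ A, f x ∈ Icc a b) ∧ ∀ x ∈ A, ∀ y ∈ A, x < y → ¬ FinSur (Icc (f x) (f y))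

theorem SpreadEmb.mono {a b a' b' : L} {A B : Set L} (ha : a' ≤ a) (hb : b ≤ b') (h : Emb A B)
    (hB : SpreadEmb a b B) : SpreadEmb a' b' A := by
  obtain ⟨g, hg, hgB⟩ := h
  obtain ⟨f, hf, hf'⟩ := hB
  exact ⟨f ∘ g, fun x hx => Icc_subset_Icc ha hb (hf _ (hgB hx)),
    fun x hx y hy hxy => hf' _ (hgB hx) _ (hgB hy) (hg hx hy hxy)⟩

theorem isCore_Ioo {u w : L} (hI : HasSmallClasses (Icc u w)) (hn : ¬ FinSur (Icc u w))
    (hst : ∀ c d, u ≤ c → d ≤ w → ¬ FinSur (Icc c d) → ∀ A, FinSur A →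
      (Emb A (Ioo u w) → Emb A (Ioo c d)) ∧ (SpreadEmb u w A → SpreadEmb c d A))
    {S : ℕ → Set L} (hS : ∀ n, ScatteredOn (S n)) (hcov : ⋃ n, S n = univ) :
    IsCore (Ioo u w) := by
  have huw := lt_of_not_finSur_Icc hn
  have : Nonempty L := ⟨u⟩
  let V : L → L → Prop := fun a b => u ≤ a ∧ b ≤ w ∧ ¬ FinSur (Icc a b)
  have hlt : ∀ a b, V a b → a < b := fun a b h => lt_of_not_finSur_Icc h.2.2
  have hsplit : ∀ a b, V a b → ∃ c, V a c ∧ V c b := by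
    rintro a b ⟨ha, hb, h⟩
    have h0 := (lt_of_not_finSur_Icc h).le
    obtain ⟨c, h1, h2⟩ := hI.split ordConnected_Icc ⟨ha, h0.trans hb⟩ ⟨ha.trans h0, hb⟩ h
    exact ⟨c, ⟨ha, (lt_of_not_finSur_Icc h2).le.trans hb, h1⟩,
      ⟨ha.trans (lt_of_not_finSur_Icc h1).le, hb, h2⟩⟩
  have hVuw : V u w := ⟨le_rfl, le_rfl, hn⟩
  obtain ⟨D, -, hDJ, hD, hmax⟩ := exists_maximal_isSpread (fun a b => ¬ FinSur (Icc a b))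
    (D₀ := ∅) (fun x hx => absurd hx (notMem_empty x)) (empty_subset (Ioo u w))
  have hdense := hD.dense hDJ hmax (fun a b => lt_of_not_finSur_Icc)
    (fun a b a' b' => not_finSur_Icc_mono) fun a ha b hb h => by
      obtain ⟨c, h1, h2⟩ := hsplit a b ⟨ha.1.le, hb.2.le, h⟩
      exact ⟨c, ⟨ha.1.trans (hlt _ _ h1), (hlt _ _ h2).trans hb.2⟩, h1.2.2, h2.2.2⟩
  have hDmem : ∀ a b, V a b → ∃ d ∈ D, a < d ∧ d < b := by
    intro a b hab
    obtain ⟨c, h1, h2⟩ := hsplit a b hab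
    by_cases hc : c ∈ D
    · exact ⟨c, hc, hlt _ _ h1, hlt _ _ h2⟩
    obtain ⟨x, hx, ⟨hxc, h⟩ | ⟨hcx, h⟩⟩ := hmax c
      ⟨hab.1.trans_lt (hlt _ _ h1), (hlt _ _ h2).trans_le hab.2.1⟩ hc
    · exact ⟨x, hx, lt_of_not_ge fun hxa => h (not_finSur_Icc_mono hxa le_rfl h1.2.2),
        hxc.trans (hlt _ _ h2)⟩
    · exact ⟨x, hx, (hlt _ _ h1).trans hcx,
        lt_of_not_ge fun hbx => h (not_finSur_Icc_mono le_rfl hbx h2.2.2)⟩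
  have hspread : SpreadEmb u w D := ⟨id, fun x hx => Ioo_subset_Icc_self (hDJ hx), hD⟩
  have hsp : ∀ A ⊆ D, FinSur A → ∀ a b, V a b → SpreadEmb a b A := fun A hA hf a b hab =>
    (hst a b hab.1 hab.2.1 hab.2.2 A hf).2 (hspread.mono le_rfl le_rfl (.of_subset hA))
  obtain ⟨g, hg, hg'⟩ := Roomy.of_iUnion_scatteredOn (V := V) hlt hsplit (Z := D)
    (fun A hA hwf a b hab => by
      obtain ⟨f, hf, hf'⟩ := hsp A hA (.sur fun x _ => hwf.subset inter_subset_left) a b hab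
      exact ⟨f, hf, fun x hx y hy hxy => ⟨hab.1.trans (hf x hx).1, (hf y hy).2.trans hab.2.1,
        hf' x hx y hy hxy⟩⟩)
    (fun A hA hwf a b hab => by
      obtain ⟨f, hf, hf'⟩ := hsp (OrderDual.toDual ⁻¹' A) (fun x hx => hA hx)
        (.rev fun x _ => Set.WellFoundedOn.subset (t := OrderDual.toDual ⁻¹' A) hwf
          inter_subset_left) _ _ hab
      exact ⟨fun x => OrderDual.toDual (f x.ofDual), fun x hx => ⟨(hf _ hx).2, (hf _ hx).1⟩,
        fun x hx y hy hxy => ⟨hab.1.trans (hf _ hy).1, (hf _ hx).2.trans hab.2.1,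
          hf' _ hy _ hx hxy⟩⟩)
    hS (hcov ▸ subset_univ D) u w hVuw
  let Cl : L → Set L := fun d => {y ∈ Ioo u w | FinSur (Icc d y) ∧ FinSur (Icc y d)}
  have hClfin : ∀ d ∈ Ioo u w, FinSur (Cl d) := fun d hd =>
    (hI d (Ioo_subset_Icc_self hd)).2.of_subset_union (hI d (Ioo_subset_Icc_self hd)).1 (c := d)
      (fun y hy => ⟨Ioo_subset_Icc_self hy.1.1, le_of_lt hy.2, hy.1.2.2⟩)
      fun y hy => ⟨Ioo_subset_Icc_self hy.1.1, hy.2, hy.1.2.1⟩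
  have hClconn : ∀ d, (Cl d).OrdConnected := fun d => ⟨fun y hy z hz x hx =>
    ⟨ordConnected_Ioo.out hy.1 hz.1 hx, hz.2.1.mono (Icc_subset_Icc_right hx.2),
      hy.2.2.mono (Icc_subset_Icc_left hx.1)⟩⟩
  have hrep : ∀ x, ∃ d, x ∈ Ioo u w → d ∈ D ∧ x ∈ Cl d := by
    intro x
    by_cases hxD : x ∈ D
    · exact ⟨x, fun hx => ⟨hxD, hx, .of_subsingleton (subsingleton_Icc_of_ge le_rfl),
        .of_subsingleton (subsingleton_Icc_of_ge le_rfl)⟩⟩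
    by_cases hx : x ∈ Ioo u w
    · obtain ⟨d, hd, ⟨hlt, h⟩ | ⟨hlt, h⟩⟩ := hmax x hx hxD
      · exact ⟨d, fun _ => ⟨hd, hx, not_not.1 h, .of_subsingleton (subsingleton_Icc_of_ge hlt.le)⟩⟩
      · exact ⟨d, fun _ => ⟨hd, hx, .of_subsingleton (subsingleton_Icc_of_ge hlt.le), not_not.1 h⟩⟩
    · exact ⟨x, fun h => absurd h hx⟩
  choose rep hrep using hrep
  have hrepmono : ∀ x ∈ Ioo u w, ∀ y ∈ Ioo u w, x ≤ y → rep x ≤ rep y := by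
    intro x hx y hy hxy
    by_contra! h
    exact hD _ (hrep y hy).1 _ (hrep x hx).1 h ((hrep y hy).2.2.1.Icc_trans
      ((hrep x hx).2.2.2.mono (Icc_subset_Icc_left hxy)))
  let R : Set L := {x | IsIsolatedPt x} ∪ D
  have hFitunion : ∀ {M : Type _} [LinearOrder M] (s t : Set M), (∀ a b, V a b → Emb s (Ioo a b)) →
      (∀ a b, V a b → Emb t (Ioo a b)) → (∀ a ∈ s, ∀ b ∈ t, a < b) →
      ∀ a b, V a b → Emb (s ∪ t) (Ioo a b) := by
    intro M _ s t hs ht hst a b hab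
    obtain ⟨c, h1, h2⟩ := hsplit a b hab
    refine ((hs a c h1).union (ht c b h2) hst fun x hx y hy => hx.2.trans hy.1).mono Subset.rfl ?_
    exact union_subset (Ioo_subset_Ioo_right (hlt _ _ h2).le)
      (Ioo_subset_Ioo_left (hlt _ _ h1).le)
  have hFitT : ∀ a b, V a b → Emb twoSidedSeq (Ioo a b) := by
    intro a b hab
    obtain ⟨c, h1, h2⟩ := hsplit a b hab
    obtain ⟨d, hd, hd1, hd2⟩ := hDmem _ _ h1
    obtain ⟨e, he, he1, he2⟩ := hDmem _ _ h2
    obtain ⟨f, hf, hfD⟩ := exists_rat_of_dense hdense hd he (hd2.trans he1)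
    exact .of_strictMono hf fun q _ => ⟨hd1.trans_le (hfD q).2.1, (hfD q).2.2.trans_lt he2⟩
  have hFitCl : ∀ d ∈ D, ∀ a b, V a b → Emb (Ins R twoSidedSeq (Cl d)) (Ioo a b) := by
    intro d hd
    refine Ins.of_finite (Fit := fun t => ∀ a b, V a b → Emb t (Ioo a b))
      (fun s t hst ht a b hab => (ht a b hab).mono hst Subset.rfl) (fun s t => hFitunion s t)
      (fun a b hab => ?_) (fun x _ a b hab => ?_) ?_
    · exact (Ins.emb_empty _ _).trans ((hst a b hab.1 hab.2.1 hab.2.2 _ (hClfin d (hDJ hd))).1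
        (.of_subset (sep_subset _ _)))
    · exact (Ins.emb_singleton R zero_mem_twoSidedSeq x).trans (hFitT a b hab)
    · refine (((hClfin d (hDJ hd)).finite_isolated (hClconn d)).union
        (finite_singleton d)).subset ?_
      rintro x ⟨hx | hx, hxd⟩
      · exact .inl ⟨hxd, hx⟩
      · rcases lt_trichotomy x d with h | h | h
        · exact absurd hxd.2.2 (hD x hx d hd h)
        · exact .inr h
        · exact absurd hxd.2.1 (hD d hd x hx h)
  refine ⟨ordConnected_Ioo, fun h => hn ?_, R, fun x _ hx => .inl hx, ?_, fun I hIJ hIc hIn => ?_⟩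
  · refine ((FinSur.of_subsingleton subsingleton_singleton).union (h.union (.of_subsingleton
      (subsingleton_singleton (a := w))) fun a ha b hb => hb ▸ ha.2)
      (s := {u}) fun a ha b hb => ?_).mono fun x hx => ?_
    · rcases hb with hb | hb
      · exact ha ▸ hb.1
      · rwa [mem_singleton_iff.1 ha, mem_singleton_iff.1 hb]
    · rcases hx.1.eq_or_lt with h1 | h1
      · exact .inl h1.symm
      · rcases hx.2.eq_or_lt with h2 | h2
        · exact .inr (.inr h2)
        · exact .inr (.inl ⟨h1, h2⟩)
  · refine Emb.glue (fun q => rep (ofLex q).1) ?_ (fun d => Ioo (g d).1 (g d).2) ?_ ?_ ?_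
    · exact fun p hp q hq hpq => hrepmono _ hp.1 _ hq.1 (fst_le_fst hpq)
    · intro p hp
      have := (hg _ (hrep _ hp.1).1).2
      exact Ioo_subset_Ioo this.1 this.2
    · intro p hp q hq hpq a ha b hb
      exact ha.2.trans ((hg' _ (hrep _ hp.1).1 _ (hrep _ hq.1).1 hpq).trans_lt hb.1)
    · intro p hp
      refine (hFitCl _ (hrep _ hp.1).1 _ _ (hg _ (hrep _ hp.1).1).1).mono (fun q hq => ?_)
        Subset.rfl
      have h := (hrep _ hq.1.1).2
      rw [show rep (ofLex q).1 = _ from hq.2] at h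
      exact ⟨h, hq.1.2⟩
  · obtain ⟨a, ha, b, hb, hab⟩ :=
      (hI.mono (hIJ.trans Ioo_subset_Icc_self)).exists_not_finSur_Icc hIn
    obtain ⟨c, h1, h2⟩ := hsplit a b ⟨(hIJ ha).1.le, (hIJ hb).2.le, hab⟩
    obtain ⟨c', h3, h4⟩ := hsplit c b h2
    obtain ⟨x, hx, hx1, hx2⟩ := hDmem _ _ h1
    obtain ⟨y, hy, hy1, hy2⟩ := hDmem _ _ h3
    obtain ⟨z, hz, hz1, hz2⟩ := hDmem _ _ h4
    have hac := hlt _ _ h1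
    have hcc := hlt _ _ h3
    have hcb := hlt _ _ h4
    have hmem : ∀ t, a < t → t < b → t ∈ I := fun t h h' => hIc.out ha hb ⟨h.le, h'.le⟩
    exact ⟨x, ⟨.inr hx, hmem x hx1 (hx2.trans (hcc.trans hcb))⟩, y, ⟨.inr hy, hmem y
      (hac.trans hy1) (hy2.trans hcb)⟩, z, ⟨.inr hz, hmem z (hac.trans (hcc.trans hz1)) hz2⟩,
      hx2.trans hy1, hy2.trans hz1⟩

theorem exists_isCore {S : ℕ → Set L} (hS : ∀ n, ScatteredOn (S n)) (hcov : ⋃ n, S n = univ)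
    {I : Set L} (hI : I.OrdConnected) (hn : ¬ FinSur I) : ∃ J ⊆ I, IsCore J := by
  by_cases hs : HasSmallClasses I
  · obtain ⟨a, ha, b, hb, hab⟩ := hs.exists_not_finSur_Icc hn
    obtain ⟨u, hu, w, hw, huw, hst⟩ := exists_bistable hI (fun a b A => Emb A (Ioo a b)) SpreadEmb
      (fun a b a' b' A B h1 h2 h3 h => (h3.trans h).mono Subset.rfl (Ioo_subset_Ioo h1 h2))
      (fun a b a' b' A B h1 h2 h3 h => h.mono h1 h2 h3) ha hb hab
    exact ⟨Ioo u w, Ioo_subset_Icc_self.trans (hI.out hu hw),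
      isCore_Ioo (hs.mono (hI.out hu hw)) huw hst hS hcov⟩
  · exact exists_isCore_of_not_hasSmallClasses hI hs

end Core

section Extension

variable {L : Type v} {R : Set L} {T : Set ℚ}

/-- The order obtained from `L` by inserting a copy of `T` at each point of `R`. -/
abbrev InsExt (R : Set L) (T : Set ℚ) : Type v := ↥(Ins R T univ)

namespace InsExt

/-- The point of `L` below a point of an extension of `L`. -/
def fst (p : InsExt R T) : L := (ofLex p.1).1

/-- The position of a point of an extension of `L` above its projection to `L`. -/
def snd (p : InsExt R T) : ℚ := (ofLex p.1).2

/-- The point at position `q` above `x`. -/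
def mk (x : L) (q : ℚ) (h : q = 0 ∨ x ∈ R ∧ q ∈ T) : InsExt R T := ⟨toLex (x, q), mem_univ x, h⟩

@[simp] theorem fst_mk (x : L) (q : ℚ) (h : q = 0 ∨ x ∈ R ∧ q ∈ T) : (mk x q h).fst = x := rfl

@[simp] theorem snd_mk (x : L) (q : ℚ) (h : q = 0 ∨ x ∈ R ∧ q ∈ T) : (mk x q h).snd = q := rfl

theorem prop (p : InsExt R T) : p.snd = 0 ∨ p.fst ∈ R ∧ p.snd ∈ T := p.2.2

variable [LinearOrder L]

theorem lt_iff {p q : InsExt R T} : p < q ↔ p.fst < q.fst ∨ p.fst = q.fst ∧ p.snd < q.snd :=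
  Prod.Lex.lt_iff

theorem fst_mono {p q : InsExt R T} (h : p ≤ q) : p.fst ≤ q.fst := fst_le_fst h

theorem emb_mk (s : Set L) : Emb s {p : InsExt R T | p.fst ∈ s} :=
  .of_strictMono (f := fun x => mk x 0 (.inl rfl)) (fun _ _ h => lt_iff.2 (.inl h)) fun _ hx => hx

theorem emb_val (s : Set (InsExt R T)) : Emb s (Ins R T (fst '' s)) :=
  .of_strictMono (f := Subtype.val) (fun _ _ h => h) fun p hp => ⟨⟨p, hp, rfl⟩, p.2.2⟩

theorem emb_image_fst (s : Set (InsExt R T)) : Emb (fst '' s) s := by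
  have : ∀ x : L, ∃ p : InsExt R T, x ∈ fst '' s → p ∈ s ∧ p.fst = x := by
    intro x
    by_cases hx : x ∈ fst '' s
    · obtain ⟨p, hp, h⟩ := hx
      exact ⟨p, fun _ => ⟨hp, h⟩⟩
    · exact ⟨mk x 0 (.inl rfl), fun h => absurd h hx⟩
  choose f hf using this
  refine ⟨f, fun x hx y hy hxy => lt_iff.2 (.inl ?_), fun x hx => (hf x hx).1⟩
  rwa [(hf x hx).2, (hf y hy).2]

theorem ordConnected_image_fst {s : Set (InsExt R T)} (hs : s.OrdConnected) :
    (fst '' s).OrdConnected := by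
  refine ⟨?_⟩
  rintro _ ⟨p, hp, rfl⟩ _ ⟨q, hq, rfl⟩ z ⟨h1, h2⟩
  rcases h1.eq_or_lt with h1 | h1
  · exact ⟨p, hp, h1⟩
  rcases h2.eq_or_lt with h2 | h2
  · exact ⟨q, hq, h2.symm⟩
  · exact ⟨mk z 0 (.inl rfl), hs.out hp hq ⟨(lt_iff.2 (.inl h1)).le, (lt_iff.2 (.inl h2)).le⟩, rfl⟩

theorem ordConnected_preimage_fst {s : Set L} (hs : s.OrdConnected) :
    {p : InsExt R T | p.fst ∈ s}.OrdConnected :=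
  ⟨fun _ hp _ hq _ hz => hs.out hp hq ⟨fst_mono hz.1, fst_mono hz.2⟩⟩

theorem finSur (hT : FinSur T) (h0 : 0 ∈ T) {s : Set (InsExt R T)} (hs : FinSur (fst '' s))
    (hfin : (R ∩ fst '' s).Finite) : FinSur s :=
  (Ins.of_finite (Fit := FinSur) (fun _ _ h h' => h'.mono h) (fun _ _ => .union)
    (hs.of_emb (Ins.emb_empty _ _)) (fun x _ => hT.of_emb (Ins.emb_singleton R h0 x))
    hfin).of_emb (emb_val s)

end InsExt

variable [LinearOrder L]

theorem lt_of_notMem_ordConnected {J : Set L} (hJ : J.OrdConnected) {a b c : L} (ha : a ∈ J)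
    (hc : c ∈ J) (hb : b ∉ J) (h : a < b) : c < b :=
  lt_of_not_ge fun hbc => hb (hJ.out ha hc ⟨h.le, hbc⟩)

theorem lt_of_notMem_ordConnected' {J : Set L} (hJ : J.OrdConnected) {a b c : L} (ha : a ∈ J)
    (hc : c ∈ J) (hb : b ∉ J) (h : b < a) : b < c :=
  lt_of_not_ge fun hbc => hb (hJ.out hc ha ⟨hbc, h.le⟩)

theorem InsExt.emb_univ {F : Set (Set L)} (hF : F.PairwiseDisjoint id)
    (hconn : ∀ J ∈ F, J.OrdConnected) (hemb : ∀ J ∈ F, Emb (Ins R T J) J) (hR : R ⊆ ⋃₀ F) :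
    Emb (univ : Set (InsExt R T)) (univ : Set L) := by
  classical
  rcases isEmpty_or_nonempty L with h | h
  · exact ⟨fst, fun p => (h.false p.fst).elim, mapsTo_univ _ _⟩
  have huniq : ∀ J ∈ F, ∀ K ∈ F, ∀ x ∈ J, x ∈ K → J = K := fun J hJ K hK x hx hx' =>
    hF.elim_set hJ hK x hx hx'
  have hJ : ∀ x, ∃ J, x ∈ ⋃₀ F → J ∈ F ∧ x ∈ J := by
    intro x
    by_cases hx : x ∈ ⋃₀ F
    · obtain ⟨J, hJ⟩ := hx
      exact ⟨J, fun _ => hJ⟩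
    · exact ⟨∅, fun h => absurd h hx⟩
  choose J hJ using hJ
  have hf : ∀ K, ∃ f : L ×ₗ ℚ → L, K ∈ F → StrictMonoOn f (Ins R T K) ∧ MapsTo f (Ins R T K) K := by
    intro K
    by_cases hK : K ∈ F
    · obtain ⟨f, hf⟩ := hemb K hK
      exact ⟨f, fun _ => hf⟩
    · exact ⟨fun _ => Classical.arbitrary L, fun h => absurd h hK⟩
  choose f hf using hf
  have hmem : ∀ p : InsExt R T, p.fst ∈ ⋃₀ F → p.1 ∈ Ins R T (J p.fst) := fun p hp =>
    ⟨(hJ _ hp).2, p.2.2⟩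
  have hfmem : ∀ p : InsExt R T, p.fst ∈ ⋃₀ F → f (J p.fst) p.1 ∈ J p.fst := fun p hp =>
    (hf _ (hJ _ hp).1).2 (hmem p hp)
  refine ⟨fun p => if p.fst ∈ ⋃₀ F then f (J p.fst) p.1 else p.fst, fun p _ q _ hpq => ?_,
    mapsTo_univ _ _⟩
  have hne : ∀ r : InsExt R T, r.fst ∉ ⋃₀ F → r.snd = 0 := fun r hr =>
    r.prop.resolve_right fun h => hr (hR h.1)
  have hlt : p.fst = q.fst ∨ p.fst < q.fst := (fst_mono hpq.le).eq_or_lt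
  by_cases hp : p.fst ∈ ⋃₀ F <;> by_cases hq : q.fst ∈ ⋃₀ F <;>
    simp only [hp, hq, if_true, if_false]
  · by_cases h : J p.fst = J q.fst
    · have h1 := hmem p hp
      rw [h] at h1 ⊢
      exact (hf _ (hJ _ hq).1).1 h1 (hmem q hq) hpq
    · have h1 : ∀ x ∈ J p.fst, x ∉ J q.fst := fun x hx hx' =>
        h (huniq _ (hJ _ hp).1 _ (hJ _ hq).1 x hx hx')
      have h2 : p.fst < q.fst := hlt.resolve_left fun heq => h (congrArg J heq)
      have h3 := lt_of_notMem_ordConnected (hconn _ (hJ _ hp).1) (hJ _ hp).2 (hfmem p hp)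
        (fun hx => h1 _ hx (hJ _ hq).2) h2
      exact lt_of_notMem_ordConnected' (hconn _ (hJ _ hq).1) (hJ _ hq).2 (hfmem q hq)
        (h1 _ (hfmem p hp)) h3
  · exact lt_of_notMem_ordConnected (hconn _ (hJ _ hp).1) (hJ _ hp).2 (hfmem p hp)
        (fun hx => hq ⟨_, (hJ _ hp).1, hx⟩) (hlt.resolve_left fun h => hq (h ▸ hp))
  · exact lt_of_notMem_ordConnected' (hconn _ (hJ _ hq).1) (hJ _ hq).2 (hfmem q hq)
        (fun hx => hp ⟨_, (hJ _ hq).1, hx⟩) (hlt.resolve_left fun h => hp (h ▸ hq))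
  · rcases lt_iff.1 hpq with h | ⟨-, h⟩
    · exact h
    · rw [hne p hp, hne q hq] at h
      exact absurd h (lt_irrefl _)

end Extension

/-- Every large convex set has a large convex subset without isolated points. -/
def HasLargeNonisolated (L : Type v) [LinearOrder L] : Prop :=
  ∀ I : Set L, I.OrdConnected → ¬ FinSur I →
    ∃ J ⊆ I, J.OrdConnected ∧ ¬ FinSur J ∧ ∀ x ∈ J, ¬ IsIsolatedPt x

theorem IsIsolatedPt.map {L M : Type v} [LinearOrder L] [LinearOrder M] (e : L ≃o M) {x : L}
    (h : IsIsolatedPt x) : IsIsolatedPt (e x) := by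
  obtain ⟨⟨⟨a, ha⟩, b, hb⟩, h1, h2⟩ := h
  refine ⟨⟨⟨e a, e.lt_iff_lt.2 ha⟩, e b, e.lt_iff_lt.2 hb⟩, fun y hy => ?_, fun y hy => ?_⟩
  · obtain ⟨z, hz⟩ := h1 (e.symm y) (e.symm_apply_lt.2 hy)
    exact ⟨e z, e.symm_apply_lt.1 hz.1, e.lt_iff_lt.2 hz.2⟩
  · obtain ⟨z, hz⟩ := h2 (e.symm y) (e.lt_symm_apply.2 hy)
    exact ⟨e z, e.lt_iff_lt.2 hz.1, e.lt_symm_apply.1 hz.2⟩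

theorem HasLargeNonisolated.of_orderIso {L M : Type v} [LinearOrder L] [LinearOrder M] (e : L ≃o M)
    (h : HasLargeNonisolated L) : HasLargeNonisolated M := by
  intro I hI hn
  obtain ⟨J, hJI, hJ, hJn, hJi⟩ := h (e ⁻¹' I) (hI.preimage_mono e.monotone) fun hf => hn
    (hf.of_emb (.of_strictMono e.symm.strictMono fun x hx => by simpa using hx))
  exact ⟨e.symm ⁻¹' J, fun x hx => by simpa using hJI hx, hJ.preimage_mono e.symm.monotone,
    fun hf => hJn (hf.of_emb (.of_strictMono e.strictMono fun x hx => by simpa using hx)),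
    fun x hx hi => hJi _ hx (hi.map e.symm)⟩

section Extension

variable {L : Type v} [LinearOrder L]

theorem exists_mem_twoSidedSeq_between {q : ℚ} (h : q < 0) : ∃ r ∈ twoSidedSeq, q < r ∧ r < 0 := by
  obtain ⟨n, hn⟩ := exists_nat_one_div_lt (neg_pos.2 h)
  have : (0 : ℚ) < 1 / (n + 1) := by positivity
  exact ⟨_, .inl ⟨n, rfl⟩, by simp only [neg_div]; linarith, by simp only [neg_div]; linarith⟩

theorem InsExt.isIsolatedPt {R : Set L} {x y z : L} (hy : y ∈ R) (hxy : x < y) (hyz : y < z) :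
    IsIsolatedPt (mk (R := R) (T := twoSidedSeq) y 0 (.inl rfl)) := by
  refine ⟨⟨⟨mk x 0 (.inl rfl), lt_iff.2 (.inl hxy)⟩, mk z 0 (.inl rfl), lt_iff.2 (.inl hyz)⟩,
    fun p hp => ?_, fun p hp => ?_⟩
  · rcases lt_iff.1 hp with h | ⟨h, h'⟩
    · obtain ⟨r, hr, h1, h2⟩ := exists_mem_twoSidedSeq_between (q := -1) (by norm_num)
      exact ⟨mk y r (.inr ⟨hy, hr⟩), lt_iff.2 (.inl h), lt_iff.2 (.inr ⟨rfl, h2⟩)⟩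
    · obtain ⟨r, hr, h1, h2⟩ := exists_mem_twoSidedSeq_between h'
      exact ⟨mk y r (.inr ⟨hy, hr⟩), lt_iff.2 (.inr ⟨h, h1⟩), lt_iff.2 (.inr ⟨rfl, h2⟩)⟩
  · rcases lt_iff.1 hp with h | ⟨h, h'⟩
    · obtain ⟨r, hr, h1, h2⟩ := exists_mem_twoSidedSeq_between (q := -1) (by norm_num)
      exact ⟨mk y (-r) (.inr ⟨hy, neg_mem_twoSidedSeq hr⟩),
        lt_iff.2 (.inr ⟨rfl, neg_pos.2 h2⟩), lt_iff.2 (.inl h)⟩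
    · obtain ⟨r, hr, h1, h2⟩ := exists_mem_twoSidedSeq_between (neg_neg_of_pos h')
      exact ⟨mk y (-r) (.inr ⟨hy, neg_mem_twoSidedSeq hr⟩),
        lt_iff.2 (.inr ⟨rfl, neg_pos.2 h2⟩), lt_iff.2 (.inr ⟨h, neg_lt.1 h1⟩)⟩

theorem finite_of_not_exists_lt_lt {s : Set L}
    (h : ¬ ∃ x ∈ s, ∃ y ∈ s, ∃ z ∈ s, x < y ∧ y < z) : s.Finite := by
  by_cases hs : s.Subsingleton
  · exact hs.finite
  obtain ⟨x, hx, y, hy, hxy⟩ := (not_subsingleton_iff.1 hs).exists_lt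
  refine (toFinite {x, y}).subset fun z hz => ?_
  by_contra hn
  simp only [mem_insert_iff, mem_singleton_iff, not_or] at hn
  rcases lt_or_gt_of_ne hn.1 with h1 | h1
  · exact h ⟨z, hz, x, hx, y, hy, h1, hxy⟩
  rcases lt_or_gt_of_ne hn.2 with h2 | h2
  · exact h ⟨x, hx, z, hz, y, hy, h1, h2⟩
  · exact h ⟨x, hx, y, hy, z, hz, hxy, h2⟩

theorem IsCore.exists_insExt {J : Set L} (hJ : IsCore J) : ∃ R : Set L,
    Emb (univ : Set (InsExt R twoSidedSeq)) (univ : Set L) ∧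
      ¬ HasLargeNonisolated (InsExt R twoSidedSeq) := by
  obtain ⟨R, -, hemb, hR⟩ := hJ.exists_emb
  refine ⟨R ∩ J, InsExt.emb_univ (F := {J}) (pairwiseDisjoint_singleton _ _)
    (fun K hK => hK ▸ hJ.ordConnected) (fun K hK => ?_) (fun x hx => ⟨J, rfl, hx.2⟩), fun h => ?_⟩
  · rw [mem_singleton_iff.1 hK]
    exact hemb.mono (Ins.mono (fun x hx => hx.1.1) Subset.rfl Subset.rfl) Subset.rfl
  obtain ⟨I, hI, hIc, hIn, hIi⟩ := h _ (InsExt.ordConnected_preimage_fst hJ.ordConnected)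
    fun h => hJ.not_finSur (h.of_emb (InsExt.emb_mk J))
  have hK : InsExt.fst '' I ⊆ J := image_subset_iff.2 hI
  by_cases h3 : ∃ x ∈ R ∩ InsExt.fst '' I, ∃ y ∈ R ∩ InsExt.fst '' I, ∃ z ∈ R ∩ InsExt.fst '' I,
      x < y ∧ y < z
  · obtain ⟨_, ⟨-, p, hp, rfl⟩, y, hy, _, ⟨-, q, hq, rfl⟩, h1, h2⟩ := h3
    exact hIi _ (hIc.out hp hq ⟨(InsExt.lt_iff.2 (.inl h1)).le, (InsExt.lt_iff.2 (.inl h2)).le⟩)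
      (InsExt.isIsolatedPt ⟨hy.1, hK hy.2⟩ h1 h2)
  · refine hIn (InsExt.finSur finSur_twoSidedSeq zero_mem_twoSidedSeq ?_ ?_)
    · by_contra hn
      exact h3 (hR _ hK (InsExt.ordConnected_image_fst hIc) hn)
    · exact (finite_of_not_exists_lt_lt h3).subset (inter_subset_inter_left _ inter_subset_left)

theorem exists_maximal_family (L : Type v) [LinearOrder L] : ∃ F : Set (Set L),
    F.PairwiseDisjoint id ∧ (∀ J ∈ F, IsCore J) ∧ ∀ C, IsCore C → ∃ J ∈ F, (C ∩ J).Nonempty := by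
  obtain ⟨F, hF⟩ := zorn_subset {F : Set (Set L) | F.PairwiseDisjoint id ∧ ∀ J ∈ F, IsCore J}
    fun c hc hch => ⟨⋃₀ c, ⟨(pairwiseDisjoint_sUnion hch.directedOn).2 fun s hs => (hc hs).1,
      fun J ⟨s, hs, hJ⟩ => (hc hs).2 J hJ⟩, fun s hs => subset_sUnion_of_mem hs⟩
  refine ⟨F, hF.prop.1, hF.prop.2, fun C hC => ?_⟩
  by_contra! h
  have hCF : C ∈ F := hF.le_of_ge (y := insert C F)
    ⟨hF.prop.1.insert fun J hJ _ => disjoint_iff_inter_eq_empty.2 (h J hJ),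
      forall_mem_insert.2 ⟨hC, hF.prop.2⟩⟩ (subset_insert _ _) (mem_insert _ _)
  refine hC.not_finSur ?_
  rw [← inter_self C, h C hCF]
  exact .of_subsingleton subsingleton_empty

theorem FinSur.of_initial {s t : Set L} (ht : FinSur t) (hst : FinSur (s \ t))
    (hlt : ∀ a ∈ t, ∀ b ∈ s \ t, a < b) : FinSur s :=
  (ht.union hst hlt).mono fun x hx => (em (x ∈ t)).imp id fun h => ⟨hx, h⟩

theorem FinSur.of_final {s t : Set L} (ht : FinSur t) (hst : FinSur (s \ t))
    (hlt : ∀ a ∈ s \ t, ∀ b ∈ t, a < b) : FinSur s :=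
  (hst.union ht hlt).mono fun x hx => (em (x ∈ t)).symm.imp (fun h => ⟨hx, h⟩) id

theorem exists_mem_family_not_finSur {S : ℕ → Set L} (hS : ∀ n, ScatteredOn (S n))
    (hcov : ⋃ n, S n = univ) {F : Set (Set L)} (hdisj : F.PairwiseDisjoint id)
    (hF : ∀ J ∈ F, IsCore J) (hmax : ∀ C, IsCore C → ∃ J ∈ F, (C ∩ J).Nonempty)
    {K : Set L} (hK : K.OrdConnected) (hn : ¬ FinSur K) : ∃ J ∈ F, ¬ FinSur (K ∩ J) := by
  by_contra! h
  have huniq : ∀ J ∈ F, ∀ K ∈ F, ∀ x ∈ J, x ∈ K → J = K := fun J hJ K hK x hx hx' =>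
    hdisj.elim_set hJ hK x hx hx'
  let A : Set L := {x ∈ K | ∃ J ∈ F, x ∈ J ∧ ∃ y ∈ J, ∀ k ∈ K, y < k}
  let B : Set L := {x ∈ K | ∃ J ∈ F, x ∈ J ∧ ∃ y ∈ J, ∀ k ∈ K, k < y}
  have hA : FinSur A := by
    rcases A.eq_empty_or_nonempty with h0 | ⟨x, hx, J, hJ, hxJ, y, hy, hyK⟩
    · exact h0 ▸ .of_subsingleton subsingleton_empty
    · refine (h J hJ).mono fun x' hx' => ⟨hx'.1, ?_⟩
      obtain ⟨hx'K, J', hJ', hxJ', y', hy', hyK'⟩ := hx'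
      rcases le_total x x' with hle | hle
      · rw [huniq J hJ J' hJ' x hxJ ((hF J' hJ').ordConnected.out hy' hxJ' ⟨(hyK' _ hx).le, hle⟩)]
        exact hxJ'
      · exact (hF J hJ).ordConnected.out hy hxJ ⟨(hyK _ hx'K).le, hle⟩
  have hB : FinSur B := by
    rcases B.eq_empty_or_nonempty with h0 | ⟨x, hx, J, hJ, hxJ, y, hy, hyK⟩
    · exact h0 ▸ .of_subsingleton subsingleton_empty
    · refine (h J hJ).mono fun x' hx' => ⟨hx'.1, ?_⟩
      obtain ⟨hx'K, J', hJ', hxJ', y', hy', hyK'⟩ := hx'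
      rcases le_total x' x with hle | hle
      · rw [huniq J hJ J' hJ' x hxJ ((hF J' hJ').ordConnected.out hxJ' hy' ⟨hle, (hyK' _ hx).le⟩)]
        exact hxJ'
      · exact (hF J hJ).ordConnected.out hxJ hy ⟨hle, (hyK _ hx'K).le⟩
  have hAlt : ∀ a ∈ A, ∀ k ∈ K, k ∉ A → a < k := by
    rintro a ⟨haK, J, hJ, haJ, y, hy, hyK⟩ k hk hkA
    exact lt_of_not_ge fun hka => hkA
      ⟨hk, J, hJ, (hF J hJ).ordConnected.out hy haJ ⟨(hyK k hk).le, hka⟩, y, hy, hyK⟩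
  have hBlt : ∀ b ∈ B, ∀ k ∈ K, k ∉ B → k < b := by
    rintro b ⟨hbK, J, hJ, hbJ, y, hy, hyK⟩ k hk hkB
    exact lt_of_not_ge fun hbk => hkB
      ⟨hk, J, hJ, (hF J hJ).ordConnected.out hbJ hy ⟨hbk, (hyK k hk).le⟩, y, hy, hyK⟩
  have hM : ((K \ A) \ B).OrdConnected := ⟨fun x hx y hy z hz => by
    have hzK := hK.out hx.1.1 hy.1.1 hz
    exact ⟨⟨hzK, fun hzA => (hAlt z hzA x hx.1.1 hx.1.2).not_ge hz.1⟩,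
      fun hzB => (hBlt z hzB y hy.1.1 hy.2).not_ge hz.2⟩⟩
  have hMn : ¬ FinSur ((K \ A) \ B) := fun hM => hn <| hA.of_initial
    (hB.of_final hM fun a ha b hb => hBlt b hb a ha.1.1 ha.2)
    fun a ha b hb => hAlt a ha b hb.1 hb.2
  obtain ⟨C, hCM, hC⟩ := exists_isCore hS hcov hM hMn
  obtain ⟨J, hJ, x, hxC, hxJ⟩ := hmax C hC
  have hx := hCM hxC
  refine (hF J hJ).not_finSur ((h J hJ).mono fun y hy => ⟨?_, hy⟩)
  by_contra hyK
  rcases lt_or_ge y x with hlt | hle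
  · exact hx.1.2 ⟨hx.1.1, J, hJ, hxJ, y, hy, fun k hk =>
      lt_of_notMem_ordConnected' hK hx.1.1 hk hyK hlt⟩
  · exact hx.2 ⟨hx.1.1, J, hJ, hxJ, y, hy, fun k hk =>
      lt_of_notMem_ordConnected hK hx.1.1 hk hyK (hle.lt_of_ne fun h => hyK (h ▸ hx.1.1))⟩

theorem InsExt.not_isIsolatedPt {R : Set L} {p : InsExt R {-1, 0, 1}}
    (hp : p.fst ∉ R → ¬ IsIsolatedPt p.fst) : ¬ IsIsolatedPt p := by
  rintro ⟨⟨⟨a, ha⟩, b, hb⟩, h1, h2⟩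
  have hT : ∀ q : InsExt R {-1, 0, 1}, q.snd = -1 ∨ q.snd = 0 ∨ q.snd = 1 := fun q =>
    q.prop.elim (fun h => .inr (.inl h)) fun h => h.2
  by_cases hR : p.fst ∈ R
  · have h3 : (1 : ℚ) ∈ ({-1, 0, 1} : Set ℚ) := by simp
    rcases hT p with hs | hs | hs
    · obtain ⟨z, hz, hz'⟩ := h2 (mk p.fst 0 (.inl rfl)) (lt_iff.2 (.inr ⟨rfl, by rw [hs]; simp⟩))
      rw [lt_iff] at hz hz'
      simp only [fst_mk, snd_mk] at hz hz'
      have := hT z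
      grind
    · obtain ⟨z, hz, hz'⟩ := h2 (mk p.fst 1 (.inr ⟨hR, h3⟩))
        (lt_iff.2 (.inr ⟨rfl, by rw [hs]; simp⟩))
      rw [lt_iff] at hz hz'
      simp only [fst_mk, snd_mk] at hz hz'
      have := hT z
      grind
    · obtain ⟨z, hz, hz'⟩ := h1 (mk p.fst 0 (.inl rfl)) (lt_iff.2 (.inr ⟨rfl, by rw [hs]; simp⟩))
      rw [lt_iff] at hz hz'
      simp only [fst_mk, snd_mk] at hz hz'
      have := hT z
      grind
  · have h0 : ∀ q : InsExt R {-1, 0, 1}, q.fst = p.fst → q.snd = 0 := fun q hq =>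
      q.prop.resolve_right fun h => hR (hq ▸ h.1)
    have hm : ∀ (y : L) (r : ℚ), r ∈ ({-1, 0, 1} : Set ℚ) → ∃ m : InsExt R {-1, 0, 1},
        m.fst = y ∧ (y ∈ R → m.snd = r) ∧ (y ∉ R → m.snd = 0) := fun y r hr => by
      by_cases hy : y ∈ R
      · exact ⟨mk y r (.inr ⟨hy, hr⟩), rfl, fun _ => rfl, fun h => absurd hy h⟩
      · exact ⟨mk y 0 (.inl rfl), rfl, fun h => absurd h hy, fun _ => rfl⟩
    have hp0 := h0 p rfl
    refine hp hR ⟨⟨⟨a.fst, ?_⟩, b.fst, ?_⟩, fun y hy => ?_, fun y hy => ?_⟩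
    · have := h0 a
      rw [lt_iff] at ha
      grind
    · have := h0 b
      rw [lt_iff] at hb
      grind
    · obtain ⟨m, rfl, hm1, hm0⟩ := hm y 1 (by simp)
      obtain ⟨z, hz, hz'⟩ := h1 m (lt_iff.2 (.inl hy))
      rw [lt_iff] at hz hz'
      have hT := hT z
      have hz0 := z.prop
      have h0 := h0 z
      clear h1 h2 ha hb hm
      by_cases hm : m.fst ∈ R <;> exact ⟨z.fst, by grind, by grind⟩
    · obtain ⟨m, rfl, hm1, hm0⟩ := hm y (-1) (by simp)
      obtain ⟨z, hz, hz'⟩ := h2 m (lt_iff.2 (.inl hy))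
      rw [lt_iff] at hz hz'
      have hT := hT z
      have hz0 := z.prop
      have h0 := h0 z
      clear h1 h2 ha hb hm
      by_cases hm : m.fst ∈ R <;> exact ⟨z.fst, by grind, by grind⟩

theorem exists_insExt_hasLargeNonisolated {S : ℕ → Set L} (hS : ∀ n, ScatteredOn (S n))
    (hcov : ⋃ n, S n = univ) : ∃ R : Set L,
    Emb (univ : Set (InsExt R {-1, 0, 1})) (univ : Set L) ∧
      HasLargeNonisolated (InsExt R {-1, 0, 1}) := by
  obtain ⟨F, hdisj, hF, hmax⟩ := exists_maximal_family L
  have hT : ({-1, 0, 1} : Set ℚ) ⊆ twoSidedSeq := by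
    rintro q (rfl | rfl | rfl)
    · exact .inl ⟨0, by norm_num⟩
    · exact zero_mem_twoSidedSeq
    · exact .inr (.inr ⟨OrderDual.toDual 0, by norm_num⟩)
  refine ⟨{x ∈ ⋃₀ F | IsIsolatedPt x}, InsExt.emb_univ hdisj (fun J hJ => (hF J hJ).ordConnected)
    (fun J hJ => ?_) (sep_subset _ _), fun I hI hn => ?_⟩
  · obtain ⟨R, hR, hemb, -⟩ := (hF J hJ).exists_emb
    exact hemb.mono (Ins.mono (fun x hx => hR x hx.2 hx.1.2) hT Subset.rfl) Subset.rfl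
  have hK := InsExt.ordConnected_image_fst hI
  have hKn : ¬ FinSur (InsExt.fst '' I) := fun h => hn <|
    InsExt.finSur (finSur_twoSidedSeq.mono hT) (by simp) h <|
      (h.finite_isolated hK).subset fun x hx => ⟨hx.2, hx.1.2⟩
  obtain ⟨J, hJ, hJn⟩ := exists_mem_family_not_finSur hS hcov hdisj hF hmax hK hKn
  refine ⟨I ∩ {p | p.fst ∈ J}, inter_subset_left,
    hI.inter (InsExt.ordConnected_preimage_fst (hF J hJ).ordConnected), fun h => hJn ?_,
    fun p hp => InsExt.not_isIsolatedPt fun h h' => h ⟨⟨J, hJ, hp.2⟩, h'⟩⟩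
  refine h.of_emb ((InsExt.emb_image_fst _).mono ?_ Subset.rfl)
  rintro _ ⟨⟨p, hp, rfl⟩, hpJ⟩
  exact ⟨p, ⟨hp, hpJ⟩, rfl⟩

end Extension

theorem CSB.nonempty_orderIso {L M : Type v} [LinearOrder L] [LinearOrder M]
    (h : CSB L (· < ·)) (h1 : Emb (univ : Set L) (univ : Set M))
    (h2 : Emb (univ : Set M) (univ : Set L)) : Nonempty (L ≃o M) := by
  have key : ∀ {A B : Type v} [LinearOrder A] [LinearOrder B], Emb (univ : Set A) (univ : Set B) →
      EmbedsIn ((· < ·) : A → A → Prop) ((· < ·) : B → B → Prop) := by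
    rintro A B _ _ ⟨f, hf, -⟩
    have hf' : StrictMono f := fun x y h => hf (mem_univ x) (mem_univ y) h
    exact ⟨f, hf'.injective, fun x y => hf'.lt_iff_lt.symm⟩
  obtain ⟨f, hf, hlt⟩ := h M (· < ·) inferInstance (key h1) (key h2)
  have hf' : StrictMono f := fun x y h => (hlt x y).1 h
  exact ⟨hf'.orderIsoOfSurjective f hf.2⟩

theorem CSB.finSur {L : Type v} [LinearOrder L] (h : CSB L (· < ·))
    (hs : SigmaScattered L (· < ·)) : FinSur (univ : Set L) := by
  obtain ⟨S, hcov, hS⟩ := hs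
  have hS' : ∀ n, ScatteredOn (S n) := fun n ⟨f, hf, hfS⟩ =>
    hS n ⟨fun q => ⟨f q, hfS q⟩, fun x y hxy => hf.injective (congrArg Subtype.val hxy),
      fun x y => hf.lt_iff_lt.symm⟩
  by_contra hn
  obtain ⟨J, -, hJ⟩ := exists_isCore hS' hcov ordConnected_univ hn
  obtain ⟨R₁, hemb₁, h₁⟩ := hJ.exists_insExt
  obtain ⟨R₀, hemb₀, h₀⟩ := exists_insExt_hasLargeNonisolated hS' hcov
  obtain ⟨e₁⟩ := h.nonempty_orderIso ((InsExt.emb_mk univ).mono Subset.rfl (subset_univ _)) hemb₁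
  obtain ⟨e₀⟩ := h.nonempty_orderIso ((InsExt.emb_mk univ).mono Subset.rfl (subset_univ _)) hemb₀
  exact h₁ (h₀.of_orderIso (e₀.symm.trans e₁))

theorem exists_iterate_eq {K : Type*} {X : K → Type v} [∀ k, LinearOrder (X k)]
    [∀ k, Nonempty (X k)] (hcsb : ∀ k, CSB (X k) (· < ·)) (hfin : ∀ k, FinSur (univ : Set (X k)))
    (hfto : ¬ ∃ J : Set K, J.Infinite ∧ ∀ i ∈ J, ∀ j ∈ J, Nonempty (X i ≃o X j)) {τ : K → K}
    (hτ : ∀ k, Emb (univ : Set (X (τ k))) (univ : Set (X k))) (k : K) :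
    ∃ m n, m < n ∧ τ^[m] k = τ^[n] k := by
  by_contra! h
  have hinj : Function.Injective fun n => τ^[n] k := fun m n hmn =>
    (lt_trichotomy m n).elim (fun hlt => (h m n hlt hmn).elim) fun h' =>
      h'.elim id fun hlt => (h n m hlt hmn.symm).elim
  have hanti : ∀ m n, m ≤ n →
      Emb (univ : Set (X (τ^[n] k))) (univ : Set (X (τ^[m] k))) := fun m n hmn => by
    induction n, hmn using Nat.le_induction with
    | base => exact .of_subset Subset.rfl
    | succ n _ ih =>
      rw [Function.iterate_succ_apply']
      exact (hτ _).trans ih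
  obtain ⟨N, hN⟩ := FinSur.eventually_emb (X := fun n => X (τ^[n] k)) (fun _ => univ)
    fun n => hfin _
  have hbi : ∀ m ≥ N, ∀ n, Emb (univ : Set (X (τ^[m] k))) (univ : Set (X (τ^[n] k))) :=
    fun m hm n =>
      let ⟨p, hp, hemb⟩ := hN m hm n
      hemb.trans (hanti n p hp)
  refine hfto ⟨_, (Ici_infinite N).image hinj.injOn, ?_⟩
  rintro _ ⟨m, hm, rfl⟩ _ ⟨n, hn, rfl⟩
  exact (hcsb _).nonempty_orderIso (hbi m hm n) (hbi n hn m)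

theorem injective_of_iterate_eq {K : Type*} {σ : K → K} (hσ : Function.Surjective σ)
    (h : ∀ τ : K → K, Function.RightInverse τ σ → ∀ k, ∃ m n, m < n ∧ τ^[m] k = τ^[n] k) :
    Function.Injective σ := by
  obtain ⟨τ, hτ⟩ := hσ.hasRightInverse
  have hsurj : Function.Surjective τ := fun k => by
    obtain ⟨m, n, hmn, heq⟩ := h τ hτ k
    obtain ⟨d, rfl⟩ := Nat.exists_eq_add_of_lt hmn
    refine ⟨τ^[d] k, ?_⟩
    rw [add_assoc, Function.iterate_add_apply] at heq
    exact (Function.iterate_succ_apply' τ d k).symm.trans (hτ.injective.iterate m heq).symm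
  exact (hτ.leftInverse_of_surjective hsurj).injective

theorem unionRel_mk_iff {I : Type u} {X : I → Type v} [∀ i, LinearOrder (X i)] {i : I}
    {x y : X i} : unionRel (fun i => ((· < ·) : X i → X i → Prop)) ⟨i, x⟩ ⟨i, y⟩ ↔ x < y :=
  ⟨fun ⟨_, h⟩ => h, fun h => ⟨rfl, h⟩⟩

theorem IsCond.isIso_of_componentMap_injective {I : Type u} {X : I → Type v}
    [∀ i, LinearOrder (X i)] {f : (Σ i, X i) → Σ i, X i}
    (hf : IsCond (unionRel (fun i => ((· < ·) : X i → X i → Prop)))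
      (unionRel (fun i => ((· < ·) : X i → X i → Prop))) f)
    (h : ∀ p q, (f p).1 = (f q).1 → p.1 = q.1) :
    IsIso (unionRel (fun i => ((· < ·) : X i → X i → Prop)))
      (unionRel (fun i => ((· < ·) : X i → X i → Prop))) f := by
  have hasymm : ∀ p q, unionRel (fun i => ((· < ·) : X i → X i → Prop)) p q →
      ¬ unionRel (fun i => ((· < ·) : X i → X i → Prop)) q p := by
    rintro ⟨i, x⟩ ⟨j, y⟩ hxy hyx
    obtain rfl : i = j := hxy.1
    exact lt_asymm (unionRel_mk_iff.1 hxy) (unionRel_mk_iff.1 hyx)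
  refine ⟨hf.1, fun p q => ⟨hf.2 p q, fun hpq => ?_⟩⟩
  obtain ⟨i, x⟩ := p
  obtain ⟨j, y⟩ := q
  obtain rfl : i = j := h _ _ hpq.1
  rcases lt_trichotomy x y with hlt | rfl | hlt
  · exact unionRel_mk_iff.2 hlt
  · exact (hasymm _ _ hpq hpq).elim
  · exact (hasymm _ _ hpq (hf.2 _ _ (unionRel_mk_iff.2 hlt))).elim

end CSBOrders

/-- **Corollary (Statement 17).** Let `X i`, `i ∈ I`, be pairwise disjoint (realized by a
sigma type) σ-scattered CSB linear orders. If the sequence of order types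
`⟨otp(X i) : i ∈ I⟩` is finite-to-one (there is no infinite `J ⊆ I` such that `X i ≅ X j`
for all `i, j ∈ J`), then the disjoint union `⋃_{i∈I} X i` is a reversible poset. -/
theorem stmt17 {I : Type u} {X : I → Type v} [∀ i, LinearOrder (X i)]
    (hss : ∀ i, SigmaScattered (X i) (· < ·))
    (hcsb : ∀ i, CSB (X i) (· < ·))
    (hfto : ¬ ∃ J : Set I, J.Infinite ∧ ∀ i ∈ J, ∀ j ∈ J,
      ∃ f : X i → X j, Function.Bijective f ∧ ∀ x y : X i, x < y ↔ f x < f y) :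
    Reversible (unionRel (fun i => ((· < ·) : X i → X i → Prop))) := by
  intro f hf
  have hsame : ∀ (i : I) (x y : X i), (f ⟨i, x⟩).1 = (f ⟨i, y⟩).1 := fun i x y => by
    rcases lt_trichotomy x y with h | rfl | h
    · exact (hf.2 _ _ (unionRel_mk_iff.2 h)).1
    · rfl
    · exact (hf.2 _ _ (unionRel_mk_iff.2 h)).1.symm
  let K := {i : I // Nonempty (X i)}
  have : ∀ k : K, Nonempty (X k.1) := fun k => k.2
  let σ : K → K := fun k => ⟨_, ⟨(f ⟨k.1, Classical.arbitrary (X k.1)⟩).2⟩⟩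
  have hσ : ∀ (k : K) (x : X k.1), (f ⟨k.1, x⟩).1 = (σ k).1 := fun k x => hsame _ _ _
  have hemb : ∀ k l : K, σ k = l → Emb (Set.univ : Set (X k.1)) (Set.univ : Set (X l.1)) := by
    rintro k _ rfl
    have : ∀ x : X k.1, ∃ y : X (σ k).1, f ⟨k.1, x⟩ = ⟨_, y⟩ := fun x => by
      rw [← hσ k x]
      exact ⟨_, rfl⟩
    choose g hg using this
    refine .of_strictMono (f := g) (fun x y hxy => ?_) (Set.mapsTo_univ _ _)
    have := hf.2 _ _ (unionRel_mk_iff.2 hxy)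
    rwa [hg, hg, unionRel_mk_iff] at this
  have hsurj : Function.Surjective σ := fun k => by
    obtain ⟨⟨i, x⟩, hp⟩ := hf.1.2 ⟨k.1, Classical.arbitrary (X k.1)⟩
    exact ⟨⟨i, ⟨x⟩⟩, Subtype.ext ((hσ ⟨i, ⟨x⟩⟩ x).symm.trans (congrArg Sigma.fst hp))⟩
  have hinj : Function.Injective σ := injective_of_iterate_eq hsurj fun τ hτ =>
    exists_iterate_eq (X := fun k : K => X k.1) (fun k => hcsb k.1)
      (fun k => (hcsb k.1).finSur (hss k.1)) (fun ⟨J, hJ, hiso⟩ => hfto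
        ⟨_, hJ.image Subtype.val_injective.injOn, by
          rintro _ ⟨i, hi, rfl⟩ _ ⟨j, hj, rfl⟩
          obtain ⟨e⟩ := hiso i hi j hj
          exact ⟨e, e.bijective, fun x y => e.lt_iff_lt.symm⟩⟩)
      fun k => hemb _ _ (hτ k)
  refine hf.isIso_of_componentMap_injective ?_
  rintro ⟨i, x⟩ ⟨j, y⟩ h
  rw [hσ ⟨i, ⟨x⟩⟩ x, hσ ⟨j, ⟨y⟩⟩ y] at h
  exact congrArg Subtype.val (hinj (Subtype.ext h))
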